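/- arXiv:1610.00166 — 10 statements merged into one kernel-verified Lean document; each statement's English description precedes it below -/
import Mathlib

section
/- With F, u, J₁, J₂, J, B = ℍ[F; u, J], V = B × B, the form ⟨·,·⟩ and the maps I₁, K₁, I₂, K₂ as in the context: (a) for all x, y ∈ V and b, c ∈ B one has ⟨x·b, y·c⟩ = star(b)·⟨x,y⟩·c and ⟨y,x⟩ = −star(⟨x,y⟩) (i.e. ⟨·,·⟩ is a B-skew-hermitian form on the right B-module V); (b) each of I₁, K₁, I₂, K₂ is an endomorphism of V as a right B-module; (c) I₁∘I₁ = u·id, K₁∘K₁ = J₁·id, I₁∘K₁ = −K₁∘I₁, and I₂∘I₂ = u·id, K₂∘K₂ = J₂·id, I₂∘K₂ = −K₂∘I₂ (so I₁, K₁ generate an action of the quaternion algebra ℍ[F; u, J₁] on V, and I₂, K₂ an action of ℍ[F; u, J₂]); (d) each of I₁, K₁ commutes with each of I₂, K₂, so these two quaternion algebra actions commute. -/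
/-! Everything reduces to four identities in `B`: `i² = u`, `j² = J₁J₂`, `ji = -ij`
(`qi_mul_qi_mul`, `qj_mul_qj_mul`, `qj_mul_qi_mul`) and `star i = -i` (`star_qi`). The last gives skew-hermitian symmetry of
the form. Right `B`-linearity holds because the operators only use left multiplications, scalars
and swapping of coordinates. In `K₂²` the scalar is `J₁⁻¹ (J₁J₂) = J₂`, and in the commutation of
`I₁` with `K₂` the sign of `ji = -ij` cancels the sign in the second coordinate of `I₁`. -/

open scoped Quaternion

noncomputable section

namespace QuaternionSkewHermitianModel

variable (F : Type*) [Field F]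

/-- The element `i` of the quaternion algebra `ℍ[F, u, J]`. -/
def qi (u J : F) : ℍ[F, u, J] := ⟨0, 1, 0, 0⟩

/-- The element `j` of the quaternion algebra `ℍ[F, u, J]`. -/
def qj (u J : F) : ℍ[F, u, J] := ⟨0, 0, 1, 0⟩

variable (u J₁ J₂ : F)

/-- `V = B × B` with `B = ℍ[F, u, J₁J₂]`, the explicit model of the skew-hermitian
`B`-space `B₁ ⊗_E B₂`. -/
abbrev V := ℍ[F, u, J₁ * J₂] × ℍ[F, u, J₁ * J₂]

/-- The `B`-valued form `⟨(x₁,x₂),(y₁,y₂)⟩ = star x₁ · i · y₁ − J₁ (star x₂ · i · y₂)`. -/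
def bform (x y : V F u J₁ J₂) : ℍ[F, u, J₁ * J₂] :=
  star x.1 * qi F u (J₁ * J₂) * y.1 - J₁ • (star x.2 * qi F u (J₁ * J₂) * y.2)

/-- The operator `I₁ (x₁, x₂) = (i x₁, −(i x₂))`. -/
def I₁ (x : V F u J₁ J₂) : V F u J₁ J₂ :=
  (qi F u (J₁ * J₂) * x.1, -(qi F u (J₁ * J₂) * x.2))

/-- The operator `K₁ (x₁, x₂) = (J₁ x₂, x₁)`. -/
def K₁ (x : V F u J₁ J₂) : V F u J₁ J₂ := (J₁ • x.2, x.1)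

/-- The operator `I₂ (x₁, x₂) = (i x₁, i x₂)`. -/
def I₂ (x : V F u J₁ J₂) : V F u J₁ J₂ :=
  (qi F u (J₁ * J₂) * x.1, qi F u (J₁ * J₂) * x.2)

/-- The operator `K₂ (x₁, x₂) = (j x₂, J₁⁻¹ (j x₁))`. -/
def K₂ (x : V F u J₁ J₂) : V F u J₁ J₂ :=
  (qj F u (J₁ * J₂) * x.2, J₁⁻¹ • (qj F u (J₁ * J₂) * x.1))

theorem qi_mul_qi_mul (u J : F) (x : ℍ[F, u, J]) :
    qi F u J * (qi F u J * x) = u • x := by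
  ext <;> simp [qi]

theorem qj_mul_qj_mul (u J : F) (x : ℍ[F, u, J]) :
    qj F u J * (qj F u J * x) = J • x := by
  ext <;> simp [qj]

theorem qj_mul_qi_mul (u J : F) (x : ℍ[F, u, J]) :
    qj F u J * (qi F u J * x) = -(qi F u J * (qj F u J * x)) := by
  ext <;> simp [qi, qj] <;> ring

theorem star_qi (u J : F) : star (qi F u J) = -qi F u J := by
  ext <;> simp [qi]

/-- (a) `bform` is a `B`-skew-hermitian form on the right `B`-module `V`;
(b) `I₁, K₁, I₂, K₂` are right `B`-module endomorphisms of `V`; (c) `I₁, K₁` generate an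
action of `ℍ[F, u, J₁]` and `I₂, K₂` an action of `ℍ[F, u, J₂]`; (d) the two actions
commute. -/
theorem statement_4 (hu : u ≠ 0) (hJ₁ : J₁ ≠ 0) (hJ₂ : J₂ ≠ 0) :
    -- (a) skew-hermitian
    (∀ (x y : V F u J₁ J₂) (b c : ℍ[F, u, J₁ * J₂]),
        bform F u J₁ J₂ (x.1 * b, x.2 * b) (y.1 * c, y.2 * c)
          = star b * bform F u J₁ J₂ x y * c) ∧
    (∀ x y : V F u J₁ J₂, bform F u J₁ J₂ y x = -star (bform F u J₁ J₂ x y)) ∧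
    -- (b) right `B`-module endomorphisms
    (∀ x y : V F u J₁ J₂, I₁ F u J₁ J₂ (x + y) = I₁ F u J₁ J₂ x + I₁ F u J₁ J₂ y) ∧
    (∀ (x : V F u J₁ J₂) (b : ℍ[F, u, J₁ * J₂]),
        I₁ F u J₁ J₂ (x.1 * b, x.2 * b) = ((I₁ F u J₁ J₂ x).1 * b, (I₁ F u J₁ J₂ x).2 * b)) ∧
    (∀ x y : V F u J₁ J₂, K₁ F u J₁ J₂ (x + y) = K₁ F u J₁ J₂ x + K₁ F u J₁ J₂ y) ∧
    (∀ (x : V F u J₁ J₂) (b : ℍ[F, u, J₁ * J₂]),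
        K₁ F u J₁ J₂ (x.1 * b, x.2 * b) = ((K₁ F u J₁ J₂ x).1 * b, (K₁ F u J₁ J₂ x).2 * b)) ∧
    (∀ x y : V F u J₁ J₂, I₂ F u J₁ J₂ (x + y) = I₂ F u J₁ J₂ x + I₂ F u J₁ J₂ y) ∧
    (∀ (x : V F u J₁ J₂) (b : ℍ[F, u, J₁ * J₂]),
        I₂ F u J₁ J₂ (x.1 * b, x.2 * b) = ((I₂ F u J₁ J₂ x).1 * b, (I₂ F u J₁ J₂ x).2 * b)) ∧
    (∀ x y : V F u J₁ J₂, K₂ F u J₁ J₂ (x + y) = K₂ F u J₁ J₂ x + K₂ F u J₁ J₂ y) ∧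
    (∀ (x : V F u J₁ J₂) (b : ℍ[F, u, J₁ * J₂]),
        K₂ F u J₁ J₂ (x.1 * b, x.2 * b) = ((K₂ F u J₁ J₂ x).1 * b, (K₂ F u J₁ J₂ x).2 * b)) ∧
    -- (c) quaternion relations
    (∀ x : V F u J₁ J₂, I₁ F u J₁ J₂ (I₁ F u J₁ J₂ x) = u • x) ∧
    (∀ x : V F u J₁ J₂, K₁ F u J₁ J₂ (K₁ F u J₁ J₂ x) = J₁ • x) ∧
    (∀ x : V F u J₁ J₂, I₁ F u J₁ J₂ (K₁ F u J₁ J₂ x) = -K₁ F u J₁ J₂ (I₁ F u J₁ J₂ x)) ∧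
    (∀ x : V F u J₁ J₂, I₂ F u J₁ J₂ (I₂ F u J₁ J₂ x) = u • x) ∧
    (∀ x : V F u J₁ J₂, K₂ F u J₁ J₂ (K₂ F u J₁ J₂ x) = J₂ • x) ∧
    (∀ x : V F u J₁ J₂, I₂ F u J₁ J₂ (K₂ F u J₁ J₂ x) = -K₂ F u J₁ J₂ (I₂ F u J₁ J₂ x)) ∧
    -- (d) the two actions commute
    (∀ x : V F u J₁ J₂, I₁ F u J₁ J₂ (I₂ F u J₁ J₂ x) = I₂ F u J₁ J₂ (I₁ F u J₁ J₂ x)) ∧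
    (∀ x : V F u J₁ J₂, I₁ F u J₁ J₂ (K₂ F u J₁ J₂ x) = K₂ F u J₁ J₂ (I₁ F u J₁ J₂ x)) ∧
    (∀ x : V F u J₁ J₂, K₁ F u J₁ J₂ (I₂ F u J₁ J₂ x) = I₂ F u J₁ J₂ (K₁ F u J₁ J₂ x)) ∧
    (∀ x : V F u J₁ J₂, K₁ F u J₁ J₂ (K₂ F u J₁ J₂ x) = K₂ F u J₁ J₂ (K₁ F u J₁ J₂ x)) := by
  refine ⟨?_, ?_, ?_, ?_, ?_, ?_, ?_, ?_, ?_, ?_, ?_, ?_, ?_, ?_, ?_, ?_, ?_, ?_, ?_, ?_⟩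
  · intro x y b c
    simp only [bform, star_mul, mul_sub, sub_mul, mul_smul_comm, smul_mul_assoc, mul_assoc]
  · intro x y
    simp only [bform, star_sub, QuaternionAlgebra.star_smul', star_mul, star_star, star_qi,
      mul_neg, neg_mul, smul_neg, mul_assoc]
    abel
  all_goals
    intros
    ext1 <;>
    simp [I₁, K₁, I₂, K₂, mul_add, add_comm, mul_assoc, qi_mul_qi_mul, qj_mul_qj_mul,
      qj_mul_qi_mul, smul_smul, hJ₁]

end QuaternionSkewHermitianModel
end
end

section
/- With F, u, J₁, J₂, J, B = ℍ[F; u, J], V = B × B, the form ⟨·,·⟩ and the maps I₁, K₁, I₂, K₂ as in the context, define for α = a + b·i + c·j + d·ij ∈ ℍ[F; u, J₁] the endomorphism ρ₁(α) := a·id + b·I₁ + c·K₁ + d·(I₁∘K₁) of V, and for α = a + b·i + c·j + d·ij ∈ ℍ[F; u, J₂] the endomorphism ρ₂(α) := a·id + b·I₂ + c·K₂ + d·(I₂∘K₂). Then for k ∈ {1,2}, for every α in the respective quaternion algebra and all x, y ∈ V: ⟨ρₖ(α)x, y⟩ = ⟨x, ρₖ(star α)y⟩, and consequently ⟨ρₖ(α)x,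 ρₖ(α)y⟩ = νₖ(α)·⟨x,y⟩, where ν₁(a + b·i + c·j + d·ij) = a² − u b² − J₁ c² + u J₁ d² and ν₂(a + b·i + c·j + d·ij) = a² − u b² − J₂ c² + u J₂ d² are the reduced norms. In particular the units of ℍ[F; u, J₁] and ℍ[F; u, J₂] act on V as B-linear similitudes of ⟨·,·⟩ with similitude factors their reduced norms. -/
/-!
The generators `I₁, K₁, I₂, K₂` are skew-adjoint for the form, and within each pair they
anticommute, so conjugation of quaternions corresponds to taking adjoints: this is
`bform_ρ₁_left` and `bform_ρ₂_left`. The relations `I₁² = I₂² = u`, `K₁² = J₁`, `K₂² = J₂` and the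
anticommutation give `ρₖ(star α) ∘ ρₖ(α) = νₖ(α)` (`ρ₁_star_ρ₁` and `ρ₂_star_ρ₂`). These four
identities are checked in coordinates for the basis `1, i, j, ij`. The similitude property follows: `⟨ρₖ(α)x, ρₖ(α)y⟩ = ⟨x, ρₖ(star α)ρₖ(α)y⟩ = νₖ(α)⟨x, y⟩`.
Right `B`-linearity holds because the generators act by left multiplications and scalars.
-/

open scoped Quaternion

noncomputable section

namespace QuaternionSkewHermitianModel

variable (F : Type*) [Field F]

variable (u J₁ J₂ : F)

/-- The action `ρ₁ (a + b i + c j + d ij) = a·id + b·I₁ + c·K₁ + d·(I₁ ∘ K₁)` of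
`B₁ = ℍ[F, u, J₁]` on `V`. -/
def ρ₁ (α : ℍ[F, u, J₁]) (x : V F u J₁ J₂) : V F u J₁ J₂ :=
  α.re • x + α.imI • I₁ F u J₁ J₂ x + α.imJ • K₁ F u J₁ J₂ x
    + α.imK • I₁ F u J₁ J₂ (K₁ F u J₁ J₂ x)

/-- The action `ρ₂ (a + b i + c j + d ij) = a·id + b·I₂ + c·K₂ + d·(I₂ ∘ K₂)` of
`B₂ = ℍ[F, u, J₂]` on `V`. -/
def ρ₂ (α : ℍ[F, u, J₂]) (x : V F u J₁ J₂) : V F u J₁ J₂ :=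
  α.re • x + α.imI • I₂ F u J₁ J₂ x + α.imJ • K₂ F u J₁ J₂ x
    + α.imK • I₂ F u J₁ J₂ (K₂ F u J₁ J₂ x)

/-- The reduced norm of `B₁ = ℍ[F, u, J₁]`. -/
def ν₁ (α : ℍ[F, u, J₁]) : F :=
  α.re ^ 2 - u * α.imI ^ 2 - J₁ * α.imJ ^ 2 + u * J₁ * α.imK ^ 2

/-- The reduced norm of `B₂ = ℍ[F, u, J₂]`. -/
def ν₂ (α : ℍ[F, u, J₂]) : F :=
  α.re ^ 2 - u * α.imI ^ 2 - J₂ * α.imJ ^ 2 + u * J₂ * α.imK ^ 2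

lemma bform_smul_right (c : F) (x y : V F u J₁ J₂) :
    bform F u J₁ J₂ x (c • y) = c • bform F u J₁ J₂ x y := by
  simp only [bform, Prod.smul_fst, Prod.smul_snd, mul_smul_comm, smul_sub, smul_comm c J₁]

lemma bform_ρ₁_left (α : ℍ[F, u, J₁]) (x y : V F u J₁ J₂) :
    bform F u J₁ J₂ (ρ₁ F u J₁ J₂ α x) y
      = bform F u J₁ J₂ x (ρ₁ F u J₁ J₂ (star α) y) := by
  ext <;> simp [bform, ρ₁, I₁, K₁, qi] <;> ring

lemma ρ₁_star_ρ₁ (α : ℍ[F, u, J₁]) (x : V F u J₁ J₂) :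
    ρ₁ F u J₁ J₂ (star α) (ρ₁ F u J₁ J₂ α x) = ν₁ F u J₁ α • x := by
  ext <;> simp [ρ₁, ν₁, I₁, K₁, qi] <;> ring

set_option maxHeartbeats 1600000 in
lemma bform_ρ₂_left (hJ₁ : J₁ ≠ 0) (α : ℍ[F, u, J₂]) (x y : V F u J₁ J₂) :
    bform F u J₁ J₂ (ρ₂ F u J₁ J₂ α x) y
      = bform F u J₁ J₂ x (ρ₂ F u J₁ J₂ (star α) y) := by
  ext <;> simp [bform, ρ₂, I₂, K₂, qi, qj] <;> field_simp <;> ring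

lemma ρ₂_star_ρ₂ (hJ₁ : J₁ ≠ 0) (α : ℍ[F, u, J₂]) (x : V F u J₁ J₂) :
    ρ₂ F u J₁ J₂ (star α) (ρ₂ F u J₁ J₂ α x) = ν₂ F u J₂ α • x := by
  ext <;> simp [ρ₂, ν₂, I₂, K₂, qi, qj] <;> field_simp <;> ring

/-- For `k ∈ {1, 2}` and every `α` in the respective quaternion algebra:
`⟨ρₖ(α)x, y⟩ = ⟨x, ρₖ(star α)y⟩`, and consequently
`⟨ρₖ(α)x, ρₖ(α)y⟩ = νₖ(α)·⟨x, y⟩` with `νₖ` the reduced norm; in particular the units of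
`ℍ[F, u, J₁]` and `ℍ[F, u, J₂]` act on `V` as `B`-linear similitudes of the form. -/
theorem statement_5 (hu : u ≠ 0) (hJ₁ : J₁ ≠ 0) (hJ₂ : J₂ ≠ 0) :
    -- adjoint property for `ρ₁`
    (∀ (α : ℍ[F, u, J₁]) (x y : V F u J₁ J₂),
        bform F u J₁ J₂ (ρ₁ F u J₁ J₂ α x) y
          = bform F u J₁ J₂ x (ρ₁ F u J₁ J₂ (star α) y)) ∧
    -- similitude property for `ρ₁`
    (∀ (α : ℍ[F, u, J₁]) (x y : V F u J₁ J₂),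
        bform F u J₁ J₂ (ρ₁ F u J₁ J₂ α x) (ρ₁ F u J₁ J₂ α y)
          = ν₁ F u J₁ α • bform F u J₁ J₂ x y) ∧
    -- `ρ₁ α` is right `B`-linear
    (∀ (α : ℍ[F, u, J₁]) (x : V F u J₁ J₂) (b : ℍ[F, u, J₁ * J₂]),
        ρ₁ F u J₁ J₂ α (x.1 * b, x.2 * b)
          = ((ρ₁ F u J₁ J₂ α x).1 * b, (ρ₁ F u J₁ J₂ α x).2 * b)) ∧
    -- adjoint property for `ρ₂`
    (∀ (α : ℍ[F, u, J₂]) (x y : V F u J₁ J₂),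
        bform F u J₁ J₂ (ρ₂ F u J₁ J₂ α x) y
          = bform F u J₁ J₂ x (ρ₂ F u J₁ J₂ (star α) y)) ∧
    -- similitude property for `ρ₂`
    (∀ (α : ℍ[F, u, J₂]) (x y : V F u J₁ J₂),
        bform F u J₁ J₂ (ρ₂ F u J₁ J₂ α x) (ρ₂ F u J₁ J₂ α y)
          = ν₂ F u J₂ α • bform F u J₁ J₂ x y) ∧
    -- `ρ₂ α` is right `B`-linear
    (∀ (α : ℍ[F, u, J₂]) (x : V F u J₁ J₂) (b : ℍ[F, u, J₁ * J₂]),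
        ρ₂ F u J₁ J₂ α (x.1 * b, x.2 * b)
          = ((ρ₂ F u J₁ J₂ α x).1 * b, (ρ₂ F u J₁ J₂ α x).2 * b)) := by
  refine ⟨bform_ρ₁_left F u J₁ J₂, fun α x y => ?_, fun α x b => ?_,
    bform_ρ₂_left F u J₁ J₂ hJ₁, fun α x y => ?_, fun α x b => ?_⟩
  · rw [bform_ρ₁_left, ρ₁_star_ρ₁, bform_smul_right]
  · simp [ρ₁, I₁, K₁, add_mul, mul_assoc]
  · rw [bform_ρ₂_left F u J₁ J₂ hJ₁, ρ₂_star_ρ₂ F u J₁ J₂ hJ₁, bform_smul_right]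
  · simp [ρ₂, I₂, K₂, add_mul, mul_assoc]

end QuaternionSkewHermitianModel
end
end

section
/- Let k be a non-negative integer and v a positive real number. Then for all real numbers x and y, ∫_ℝ (x + (i/v)·w)^k · exp(−(π/2)·(v·x² + w²/v)) · exp(2πi·w·y) dw = (2^{k−1} · π^k · v^{k−1})^{−1/2} · H_k(√(2πv)·(x/2 − y)) · exp(−πv·(x²/2 + 2y²)), where the integral is a complex-valued Lebesgue integral over w ∈ ℝ. -/
open MeasureTheory

/-- The physicists' Hermite polynomial, via its characterization
`H_k t = (−1)^k · e^{t²} · (d^k/dt^k)(e^{−t²})`. -/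
noncomputable def physHermite (k : ℕ) (t : ℝ) : ℝ :=
  (-1 : ℝ) ^ k * Real.exp (t ^ 2) * iteratedDeriv k (fun s : ℝ => Real.exp (-s ^ 2)) t

/-!
Write `u = x + (i/v) w` and let `I_k(y)` be the integral. Differentiating under the integral sign
multiplies the integrand by `2πi w = 2πv (u - x)`, so `I_{k+1} = x I_k + I_k' / (2πv)`
(`hasDerivAt_hermiteIntegral`; the dominating function does not depend on `y`). The Gaussian
Fourier transform gives `I_0`. With `r = √(2πv)` and `G(s) = exp (-s²)`, the expression
`√(2v) (-1/r)^k G^{(k)}(r (x/2 - y)) exp (-2πvxy)` obeys the same recursion and has the same value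
at `k = 0`; it is the right-hand side of the theorem once the square-root constants and the
exponentials are collected.
-/

/-- The integrand `(x + (i/v) w)^k exp (-(π/2)(v x² + w²/v)) exp (2πi w y)`. -/
noncomputable def hermiteIntegrand (v x : ℝ) (k : ℕ) (y w : ℝ) : ℂ :=
  ((x : ℂ) + Complex.I / (v : ℂ) * (w : ℂ)) ^ k *
    Complex.exp (-(((Real.pi : ℂ)) / 2) * ((v : ℂ) * (x : ℂ) ^ 2 + (w : ℂ) ^ 2 / (v : ℂ))) *
    Complex.exp (2 * (Real.pi : ℂ) * Complex.I * (w : ℂ) * (y : ℂ))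

lemma continuous_hermiteIntegrand (v x : ℝ) (k : ℕ) (y : ℝ) :
    Continuous (hermiteIntegrand v x k y) := by
  unfold hermiteIntegrand
  fun_prop

lemma norm_hermiteIntegrand (v x : ℝ) (k : ℕ) (y w : ℝ) :
    ‖hermiteIntegrand v x k y w‖ = ‖hermiteIntegrand v x k 0 w‖ := by
  have h (y : ℝ) : ‖Complex.exp (2 * (Real.pi : ℂ) * Complex.I * (w : ℂ) * (y : ℂ))‖ = 1 := by
    rw [show 2 * (Real.pi : ℂ) * Complex.I * (w : ℂ) * (y : ℂ)
      = ((2 * Real.pi * w * y : ℝ) : ℂ) * Complex.I by push_cast; ring]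
    exact Complex.norm_exp_ofReal_mul_I _
  simp only [hermiteIntegrand, norm_mul, h]

/-- The extra power `w ^ j` makes the induction on `k` go through. -/
lemma integrable_hermiteIntegrand_zero_mul_pow (v : ℝ) (hv : 0 < v) (x : ℝ) (k j : ℕ) :
    Integrable (fun w : ℝ => hermiteIntegrand v x k 0 w * (w : ℂ) ^ j) := by
  induction k generalizing j with
  | zero =>
    have hb : 0 < Real.pi / (2 * v) := by positivity
    have h := (integrable_rpow_mul_exp_neg_mul_sq hb (s := (j : ℝ))
      (by linarith [Nat.cast_nonneg (α := ℝ) j])).ofReal (𝕜 := ℂ)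
    refine (h.const_mul (Complex.exp (-(((Real.pi : ℂ)) / 2) * ((v : ℂ) * (x : ℂ) ^ 2)))).congr
      (Filter.Eventually.of_forall fun w => ?_)
    have hv' : (v : ℂ) ≠ 0 := by exact_mod_cast hv.ne'
    simp only [hermiteIntegrand, Real.rpow_natCast, mul_add, Complex.exp_add]
    simp
    rw [show (Real.pi / (2 * v)) * (w : ℂ) ^ 2 = (Real.pi / 2 * (w ^ 2 / v) : ℂ) by field_simp]
    ring
  | succ k ih =>
    refine (((ih j).const_mul (x : ℂ)).add ((ih (j + 1)).const_mul (Complex.I / v))).congr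
      (Filter.Eventually.of_forall fun w => ?_)
    simp only [hermiteIntegrand, Pi.add_apply]
    ring

lemma integrable_hermiteIntegrand (v : ℝ) (hv : 0 < v) (x : ℝ) (k : ℕ) (y : ℝ) :
    Integrable (hermiteIntegrand v x k y) := by
  have h := integrable_hermiteIntegrand_zero_mul_pow v hv x k 0
  simp only [pow_zero, mul_one] at h
  exact h.mono (continuous_hermiteIntegrand v x k y).aestronglyMeasurable
    (Filter.Eventually.of_forall fun w => (norm_hermiteIntegrand v x k y w).le)

/-- Differentiation under the integral sign, with `2πi w` rewritten as `2πv (u - x)` for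
`u = x + (i/v) w`. -/
lemma hasDerivAt_hermiteIntegral (v : ℝ) (hv : 0 < v) (x : ℝ) (k : ℕ) (y : ℝ) :
    HasDerivAt (fun y : ℝ => ∫ w, hermiteIntegrand v x k y w)
      (2 * Real.pi * v * ((∫ w, hermiteIntegrand v x (k + 1) y w)
        - x * ∫ w, hermiteIntegrand v x k y w)) y := by
  have hv' : (v : ℂ) ≠ 0 := by exact_mod_cast hv.ne'
  have h := hasDerivAt_integral_of_dominated_loc_of_deriv_le (μ := volume)
    (F := fun y w => hermiteIntegrand v x k y w)
    (F' := fun y w => 2 * Real.pi * Complex.I * w * hermiteIntegrand v x k y w)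
    (bound := fun w => ‖2 * Real.pi * Complex.I * (hermiteIntegrand v x k 0 w * (w : ℂ) ^ 1)‖)
    (x₀ := y) (s := Set.univ) Filter.univ_mem
    (Filter.Eventually.of_forall fun y =>
      (continuous_hermiteIntegrand v x k y).aestronglyMeasurable)
    (integrable_hermiteIntegrand v hv x k y)
    (Continuous.aestronglyMeasurable
      (by have := continuous_hermiteIntegrand v x k y; fun_prop))
    (Filter.Eventually.of_forall fun w y _ => by
      have := norm_hermiteIntegrand v x k y w
      simp only [norm_mul, pow_one, this]
      apply le_of_eq
      ring)
    ((integrable_hermiteIntegrand_zero_mul_pow v hv x k 1).const_mul _).norm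
    (Filter.Eventually.of_forall fun w y _ => by
      have h1 : HasDerivAt (fun y : ℝ => 2 * (Real.pi : ℂ) * Complex.I * (w : ℂ) * (y : ℂ))
          (2 * (Real.pi : ℂ) * Complex.I * (w : ℂ) * 1) y :=
        (Complex.ofRealCLM.hasDerivAt (x := y)).const_mul _
      have h2 := h1.cexp.const_mul (((x : ℂ) + Complex.I / (v : ℂ) * (w : ℂ)) ^ k *
        Complex.exp (-(((Real.pi : ℂ)) / 2) * ((v : ℂ) * (x : ℂ) ^ 2 + (w : ℂ) ^ 2 / (v : ℂ))))
      unfold hermiteIntegrand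
      convert! h2 using 1
      ring)
  convert! h.2 using 1
  rw [← integral_const_mul, ← integral_sub (integrable_hermiteIntegrand v hv x (k + 1) y)
    ((integrable_hermiteIntegrand v hv x k y).const_mul _), ← integral_const_mul]
  congr 1
  ext w
  simp only [hermiteIntegrand, pow_succ]
  field_simp
  ring

lemma hermiteIntegral_zero (v : ℝ) (hv : 0 < v) (x y : ℝ) :
    ∫ w, hermiteIntegrand v x 0 y w
      = (Real.sqrt (2 * v) : ℂ) * Complex.exp (-(Real.pi : ℂ) * v * (x ^ 2 / 2 + 2 * y ^ 2)) := by
  have hv' : (v : ℂ) ≠ 0 := by exact_mod_cast hv.ne'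
  have hpi : (Real.pi : ℂ) ≠ 0 := by exact_mod_cast Real.pi_ne_zero
  have hb : ((-(Real.pi / (2 * v)) : ℝ) : ℂ).re < 0 := by
    rw [Complex.ofReal_re]
    have : 0 < Real.pi / (2 * v) := by positivity
    linarith
  have h := integral_cexp_quadratic hb (2 * Real.pi * Complex.I * y)
    (-(Real.pi / 2) * (v * x ^ 2))
  have hs : ((Real.pi : ℂ) / -((-(Real.pi / (2 * v)) : ℝ) : ℂ)) ^ (1 / 2 : ℂ)
      = (Real.sqrt (2 * v) : ℂ) := by
    rw [Real.sqrt_eq_rpow, Complex.ofReal_cpow (by positivity)]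
    push_cast
    congr 1
    field_simp
  rw [hs] at h
  convert! h using 2
  · ext w
    simp only [hermiteIntegrand, pow_zero, one_mul, ← Complex.exp_add]
    congr 1
    push_cast
    field_simp
    ring
  · congr 1
    push_cast
    field_simp
    simp only [Complex.I_sq]
    ring

/-- The closed form before the constants and exponentials are collected. -/
lemma hermiteIntegral_eq (v : ℝ) (hv : 0 < v) (x : ℝ) (k : ℕ) (y : ℝ) :
    ∫ w, hermiteIntegrand v x k y w
      = ((Real.sqrt (2 * v) * (-(Real.sqrt (2 * Real.pi * v))⁻¹) ^ k *
          iteratedDeriv k (fun s : ℝ => Real.exp (-s ^ 2))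
            (Real.sqrt (2 * Real.pi * v) * (x / 2 - y)) *
          Real.exp (-(2 * Real.pi * v * x) * y) : ℝ) : ℂ) := by
  have hr2 : Real.sqrt (2 * Real.pi * v) ^ 2 = 2 * Real.pi * v := Real.sq_sqrt (by positivity)
  have hr0 : 0 < Real.sqrt (2 * Real.pi * v) := Real.sqrt_pos.2 (by positivity)
  induction k generalizing y with
  | zero =>
    rw [hermiteIntegral_zero v hv, iteratedDeriv_zero, mul_pow, hr2, pow_zero, mul_one,
      mul_assoc (Real.sqrt (2 * v)), ← Real.exp_add]
    push_cast
    congr 2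
    ring
  | succ k ih =>
    set r := Real.sqrt (2 * Real.pi * v)
    have hG : HasDerivAt (iteratedDeriv k (fun s : ℝ => Real.exp (-s ^ 2)))
        (iteratedDeriv (k + 1) (fun s : ℝ => Real.exp (-s ^ 2)) (r * (x / 2 - y)))
        (r * (x / 2 - y)) := by
      rw [iteratedDeriv_succ]
      have hc : ContDiff ℝ (k + 1 : ℕ) (fun s : ℝ => Real.exp (-s ^ 2)) := by fun_prop
      exact (hc.differentiable_iteratedDeriv k (by exact_mod_cast Nat.lt_succ_self k) _).hasDerivAt
    have hin : HasDerivAt (fun y : ℝ => r * (x / 2 - y)) (r * (-1)) y :=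
      ((hasDerivAt_id y).const_sub (x / 2)).const_mul r
    have hexp : HasDerivAt (fun y : ℝ => Real.exp (-(2 * Real.pi * v * x) * y))
        (Real.exp (-(2 * Real.pi * v * x) * y) * (-(2 * Real.pi * v * x) * 1)) y :=
      ((hasDerivAt_id y).const_mul _).exp
    have hrhs := (((hG.comp y hin).const_mul
      (Real.sqrt (2 * v) * (-r⁻¹) ^ k)).mul hexp).ofReal_comp
    have hlhs := hasDerivAt_hermiteIntegral v hv x k y
    rw [show (fun y : ℝ => ∫ w, hermiteIntegrand v x k y w) = _ from funext ih] at hlhs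
    have huniq := hlhs.unique hrhs
    rw [ih y] at huniq
    have hne : (2 * Real.pi * v : ℂ) ≠ 0 := by
      exact_mod_cast (by positivity : 2 * Real.pi * v ≠ 0)
    rw [← sub_eq_zero, ← mul_right_inj' hne, mul_zero, mul_sub]
    rw [mul_sub, sub_eq_iff_eq_add] at huniq
    rw [huniq, sub_eq_zero]
    have hrr : 2 * Real.pi * v * r⁻¹ = r := by rw [← hr2]; field_simp
    have key : ∀ a g g' e : ℝ, a * (-r⁻¹) ^ k * (g' * (r * -1)) * e
        + a * (-r⁻¹) ^ k * g * (e * (-(2 * Real.pi * v * x) * 1))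
        + 2 * Real.pi * v * (x * (a * (-r⁻¹) ^ k * g * e))
        = 2 * Real.pi * v * (a * (-r⁻¹) ^ (k + 1) * g' * e) := by
      intro a g g' e
      rw [pow_succ]
      linear_combination (a * (-r⁻¹) ^ k * g' * e) * hrr
    exact_mod_cast key _ _ _ _

/-- `√(2v) / √(2πv)^k = (2^{k-1} π^k v^{k-1})^{-1/2}`. -/
lemma hermite_sqrt_const (k : ℕ) (v : ℝ) (hv : 0 < v) :
    Real.sqrt (2 * v) * ((Real.sqrt (2 * Real.pi * v))⁻¹) ^ k
      = (Real.sqrt ((2 : ℝ) ^ ((k : ℤ) - 1) * Real.pi ^ k * v ^ ((k : ℤ) - 1)))⁻¹ := by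
  have hr2 : Real.sqrt (2 * Real.pi * v) ^ 2 = 2 * Real.pi * v := Real.sq_sqrt (by positivity)
  symm
  rw [← Real.sqrt_inv (_ * _), Real.sqrt_eq_iff_mul_self_eq (by positivity) (by positivity)]
  rw [← sq, mul_pow, Real.sq_sqrt (by positivity), ← pow_mul, mul_comm k 2, pow_mul, inv_pow, hr2,
    zpow_sub_one₀ two_ne_zero, zpow_sub_one₀ hv.ne', zpow_natCast, zpow_natCast, inv_pow, mul_pow,
    mul_pow]
  field_simp

/-- For a non-negative integer `k`, a positive real `v` and real `x`, `y`:
`∫_ℝ (x + (i/v)w)^k e^{−(π/2)(vx² + w²/v)} e^{2πiwy} dw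
  = (2^{k−1} π^k v^{k−1})^{−1/2} H_k(√(2πv)(x/2 − y)) e^{−πv(x²/2 + 2y²)}`. -/
theorem hermite_gaussian_fourier_transform (k : ℕ) (v : ℝ) (hv : 0 < v) (x y : ℝ) :
    (∫ w : ℝ,
        ((x : ℂ) + Complex.I / (v : ℂ) * (w : ℂ)) ^ k *
          Complex.exp (-(((Real.pi : ℂ)) / 2) * ((v : ℂ) * (x : ℂ) ^ 2 + (w : ℂ) ^ 2 / (v : ℂ))) *
          Complex.exp (2 * (Real.pi : ℂ) * Complex.I * (w : ℂ) * (y : ℂ)))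
      = (((Real.sqrt ((2 : ℝ) ^ ((k : ℤ) - 1) * Real.pi ^ k * v ^ ((k : ℤ) - 1)))⁻¹ : ℝ) : ℂ) *
          ((physHermite k (Real.sqrt (2 * Real.pi * v) * (x / 2 - y)) : ℝ) : ℂ) *
          Complex.exp (-(Real.pi : ℂ) * (v : ℂ) * ((x : ℂ) ^ 2 / 2 + 2 * (y : ℂ) ^ 2)) := by
  have h := hermiteIntegral_eq v hv x k y
  unfold hermiteIntegrand at h
  rw [h, ← hermite_sqrt_const k v hv, physHermite]
  have hr2 : Real.sqrt (2 * Real.pi * v) ^ 2 = 2 * Real.pi * v := Real.sq_sqrt (by positivity)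
  have he : Real.exp (-(2 * Real.pi * v * x) * y)
      = Real.exp ((Real.sqrt (2 * Real.pi * v) * (x / 2 - y)) ^ 2)
        * Real.exp (-Real.pi * v * (x ^ 2 / 2 + 2 * y ^ 2)) := by
    rw [← Real.exp_add, mul_pow, hr2]
    congr 1
    ring
  rw [he, neg_pow]
  push_cast
  ring
end

section
/- Let μ be the Haar measure on the additive group ℚ₂ normalized so that μ(ℤ₂) = 1, and let ψ : ℚ₂ → ℂˣ be a continuous additive character with values in the unit circle that is trivial on ℤ₂ but nontrivial on (1/2)·ℤ₂. Then for all a, b ∈ ℚ₂ with 2a ∈ ℤ₂ˣ, ∫_{ℤ₂} ψ(a·x² + b·x) dμ(x) = 1 if b/a ∈ ℤ₂ˣ, and = 0 otherwise. -/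
open MeasureTheory
open scoped Classical

/-!
Every `x ∈ ℤ₂` satisfies `x² - x ∈ 2ℤ₂`, because the residue field has two elements. Since
`2a` is a unit, `a (x² - x) ∈ ℤ₂`, so the integrand equals `ψ ((a + b) x)` on `ℤ₂`: the quadratic
term is linear as far as `ψ` can see. Orthogonality of characters on `ℤ₂` then gives `1` when
`a + b ∈ ℤ₂` and `0` otherwise (`integral_linear`), and `a + b ∈ ℤ₂` is equivalent to `b / a`
being a unit: the sum of two elements of norm `2` is integral, again because the residue field
has two elements.
-/

lemma norm_two_padic : ‖(2 : ℚ_[2])‖ = 1 / 2 := by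
  simpa using Padic.norm_p (p := 2)

lemma norm_le_half_of_lt_one {x : ℚ_[2]} (h : ‖x‖ < 1) : ‖x‖ ≤ 1 / 2 := by
  have := (Padic.norm_le_pow_iff_norm_lt_pow_add_one x (-1)).2 (by simpa using h)
  simpa using this

lemma two_le_norm_of_one_lt {x : ℚ_[2]} (h : 1 < ‖x‖) : 2 ≤ ‖x‖ := by
  by_contra! h2
  have := (Padic.norm_le_pow_iff_norm_lt_pow_add_one x 0).2 (by simpa using h2)
  rw [zpow_zero] at this
  exact absurd this (not_le.2 h)

/-- The residue field of `ℤ₂` is `{0, 1}`. -/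
lemma norm_le_half_or {x : ℚ_[2]} (h : ‖x‖ ≤ 1) : ‖x‖ ≤ 1 / 2 ∨ ‖x - 1‖ ≤ 1 / 2 := by
  obtain ⟨z, rfl⟩ : ∃ z : ℤ_[2], (z : ℚ_[2]) = x := ⟨⟨x, h⟩, rfl⟩
  obtain ⟨n, hn, hm⟩ := PadicInt.exists_mem_range (p := 2) z
  rw [IsLocalRing.mem_maximalIdeal, PadicInt.mem_nonunits] at hm
  have hm' : ‖(z : ℚ_[2]) - (n : ℚ_[2])‖ < 1 := by
    rw [PadicInt.norm_def, PadicInt.coe_sub, PadicInt.coe_natCast] at hm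
    exact hm
  interval_cases n
  · left; exact norm_le_half_of_lt_one (by simpa using hm')
  · right; exact norm_le_half_of_lt_one (by simpa using hm')

lemma norm_sq_sub_self_le {x : ℚ_[2]} (h : ‖x‖ ≤ 1) : ‖x ^ 2 - x‖ ≤ 1 / 2 := by
  have h1 : ‖x - 1‖ ≤ 1 := by
    simpa [sub_eq_add_neg] using (Padic.nonarchimedean x (-1)).trans (by simpa using h)
  rw [show x ^ 2 - x = x * (x - 1) by ring, norm_mul]
  rcases norm_le_half_or h with h2 | h2 <;> nlinarith [norm_nonneg x, norm_nonneg (x - 1)]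

lemma norm_sub_one_le_of_norm_eq_one {x : ℚ_[2]} (h : ‖x‖ = 1) : ‖x - 1‖ ≤ 1 / 2 := by
  rcases norm_le_half_or h.le with h2 | h2
  · linarith
  · exact h2

lemma norm_add_le_one_iff {a b : ℚ_[2]} (ha : ‖a‖ = 2) : ‖a + b‖ ≤ 1 ↔ ‖b / a‖ = 1 := by
  have ha0 : a ≠ 0 := by rintro rfl; simp at ha
  have hab : ‖a + b‖ = 2 * ‖b / a + 1‖ := by
    rw [← ha, ← norm_mul]; congr 1; field_simp; ring
  rw [hab]
  constructor
  · intro h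
    have h1 : ‖b / a + 1‖ < ‖(-1 : ℚ_[2])‖ := by rw [norm_neg, norm_one]; linarith
    -- `b / a` is the sum of `-1` and an element of smaller norm
    have h2 := Padic.add_eq_max_of_ne h1.ne
    rw [max_eq_right h1.le] at h2
    simpa using h2
  · intro h
    have h1 := norm_sub_one_le_of_norm_eq_one h
    have h2 := Padic.nonarchimedean (b / a - 1) 2
    rw [norm_two_padic, max_eq_right h1] at h2
    rw [show b / a + 1 = b / a - 1 + 2 by ring]
    linarith

/-- Orthogonality of characters on `ℤ₂`. In the nontrivial case, translating by an element `s` of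
`ℤ₂` with `ψ (c * s) ≠ 1` multiplies the integral by `ψ (c * s)`. -/
lemma integral_linear [MeasurableSpace ℚ_[2]] [BorelSpace ℚ_[2]]
    (μ : Measure ℚ_[2]) [μ.IsAddHaarMeasure]
    (hμ : μ {x : ℚ_[2] | ‖x‖ ≤ 1} = 1)
    (ψ : ℚ_[2] → ℂ)
    (hψadd : ∀ x y : ℚ_[2], ψ (x + y) = ψ x * ψ y)
    (hψtriv : ∀ x : ℚ_[2], ‖x‖ ≤ 1 → ψ x = 1)
    (hψnontriv : ∃ x : ℚ_[2], ‖x‖ ≤ 2 ∧ ψ x ≠ 1) (c : ℚ_[2]) :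
    (∫ x in {y : ℚ_[2] | ‖y‖ ≤ 1}, ψ (c * x) ∂μ) = if ‖c‖ ≤ 1 then 1 else 0 := by
  have hS : MeasurableSet {y : ℚ_[2] | ‖y‖ ≤ 1} :=
    (isClosed_le continuous_norm continuous_const).measurableSet
  split_ifs with hc
  · have h1 : ∀ x ∈ {y : ℚ_[2] | ‖y‖ ≤ 1}, ψ (c * x) = 1 := fun x hx =>
      hψtriv _ (by rw [norm_mul]; exact mul_le_one₀ hc (norm_nonneg _) hx)
    rw [setIntegral_congr_fun hS h1]
    simp [Measure.real, hμ]
  · obtain ⟨t, ht, hψt⟩ := hψnontriv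
    have hc2 := two_le_norm_of_one_lt (not_le.1 hc)
    have hc0 : c ≠ 0 := by rintro rfl; simp at hc
    have hs : ‖t / c‖ ≤ 1 := by
      rw [norm_div, div_le_one (by linarith)]; linarith
    have hmem : ∀ x : ℚ_[2], ‖x + t / c‖ ≤ 1 ↔ ‖x‖ ≤ 1 := fun x => by
      constructor
      · intro h
        have := Padic.nonarchimedean (x + t / c) (-(t / c))
        rw [norm_neg, add_neg_cancel_right] at this
        exact this.trans (max_le h hs)
      · intro h
        exact (Padic.nonarchimedean _ _).trans (max_le h hs)
    have key : (∫ x in {y : ℚ_[2] | ‖y‖ ≤ 1}, ψ (c * x) ∂μ)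
        = ψ t * ∫ x in {y : ℚ_[2] | ‖y‖ ≤ 1}, ψ (c * x) ∂μ := by
      rw [← integral_const_mul, ← integral_indicator hS, ← integral_indicator hS,
        ← integral_add_right_eq_self _ (t / c)]
      congr 1
      funext x
      simp only [Set.indicator_apply, Set.mem_ofPred_eq, hmem]
      rw [mul_add, mul_div_cancel₀ _ hc0, hψadd, mul_comm]
    have h0 : (1 - ψ t) * ∫ x in {y : ℚ_[2] | ‖y‖ ≤ 1}, ψ (c * x) ∂μ = 0 := by
      rw [sub_mul, one_mul, ← key, sub_self]
    exact (mul_eq_zero.1 h0).resolve_left (sub_ne_zero.2 hψt.symm)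

/-- Let `μ` be the Haar measure on `ℚ₂` normalized so that `μ(ℤ₂) = 1`,
and `ψ` a continuous unitary additive character of `ℚ₂` trivial on `ℤ₂` but nontrivial on
`(1/2)ℤ₂`.  Then for all `a, b ∈ ℚ₂` with `2a ∈ ℤ₂ˣ`,
`∫_{ℤ₂} ψ (a x² + b x) dμ(x)` equals `1` if `b/a ∈ ℤ₂ˣ`, and `0` otherwise. -/
theorem padic2_quadratic_character_integral
    [MeasurableSpace ℚ_[2]] [BorelSpace ℚ_[2]]
    (μ : Measure ℚ_[2]) [μ.IsAddHaarMeasure]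
    (hμ : μ {x : ℚ_[2] | ‖x‖ ≤ 1} = 1)
    (ψ : ℚ_[2] → ℂ)
    (hψcont : Continuous ψ)
    (hψadd : ∀ x y : ℚ_[2], ψ (x + y) = ψ x * ψ y)
    (hψnorm : ∀ x : ℚ_[2], ‖ψ x‖ = 1)
    (hψtriv : ∀ x : ℚ_[2], ‖x‖ ≤ 1 → ψ x = 1)
    (hψnontriv : ∃ x : ℚ_[2], ‖x‖ ≤ 2 ∧ ψ x ≠ 1)
    (a b : ℚ_[2]) (ha : ‖2 * a‖ = 1) :
    (∫ x in {y : ℚ_[2] | ‖y‖ ≤ 1}, ψ (a * x ^ 2 + b * x) ∂μ)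
      = if ‖b / a‖ = 1 then 1 else 0 := by
  have ha2 : ‖a‖ = 2 := by
    rw [norm_mul, norm_two_padic] at ha; linarith
  have hS : MeasurableSet {y : ℚ_[2] | ‖y‖ ≤ 1} :=
    (isClosed_le continuous_norm continuous_const).measurableSet
  have h1 : ∀ x ∈ {y : ℚ_[2] | ‖y‖ ≤ 1}, ψ (a * x ^ 2 + b * x) = ψ ((a + b) * x) := by
    intro x hx
    have h2 := norm_sq_sub_self_le hx
    rw [show a * x ^ 2 + b * x = a * (x ^ 2 - x) + (a + b) * x by ring, hψadd,
      hψtriv (a * (x ^ 2 - x)) (by rw [norm_mul, ha2]; linarith), one_mul]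
  rw [setIntegral_congr_fun hS h1, integral_linear μ hμ ψ hψadd hψtriv hψnontriv]
  simp only [norm_add_le_one_iff ha2]
end

section
/- Let μ be the Haar measure on the additive group ℚ₂ normalized so that μ(ℤ₂) = 1, and let ψ : ℚ₂ → ℂˣ be a continuous additive character with values in the unit circle that is trivial on ℤ₂ but nontrivial on (1/2)·ℤ₂. Then for every a ∈ ℚ₂ with 2a ∈ ℤ₂ˣ, ∫_{ℤ₂} ψ(a·x²) dμ(x) = 0. -/
/-!
The substitution `x ↦ x + 1` preserves `ℤ₂` and the Haar measure. Since
`a (x + 1)² = a x² + 2 a x + a` and `2 a x ∈ ℤ₂`, it multiplies the integrand by the constant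
`ψ a`, so the integral `I` satisfies `I = ψ a * I`. The residue field has two elements, so `a`
represents the only nontrivial class of `(1/2)ℤ₂ / ℤ₂`; hence `ψ a ≠ 1` (`psi_ne_one_of_norm`),
and `I = 0`.
-/

open MeasureTheory

/-- An element `a` with `2a ∈ ℤ₂ˣ` generates `(1/2)ℤ₂` modulo `ℤ₂`, so a character that is trivial
on `ℤ₂` and nontrivial on `(1/2)ℤ₂` is nontrivial at `a`. -/
lemma psi_ne_one_of_norm
    (ψ : ℚ_[2] → ℂ)
    (hψadd : ∀ x y : ℚ_[2], ψ (x + y) = ψ x * ψ y)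
    (hψtriv : ∀ x : ℚ_[2], ‖x‖ ≤ 1 → ψ x = 1)
    (hψnontriv : ∃ x : ℚ_[2], ‖x‖ ≤ 2 ∧ ψ x ≠ 1)
    (a : ℚ_[2]) (ha : ‖2 * a‖ = 1) : ψ a ≠ 1 := by
  intro h1
  obtain ⟨x, hx, hne⟩ := hψnontriv
  have h2 : ‖(2 : ℚ_[2])‖ = 1 / 2 := by
    simpa using Padic.norm_p (p := 2)
  have ha2 : ‖a‖ = 2 := by
    rw [norm_mul, h2] at ha
    linarith
  have ha0 : a ≠ 0 := by
    rintro rfl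
    simp at ha2
  obtain ⟨u, hu⟩ : ∃ u : ℤ_[2], (u : ℚ_[2]) = x / a := by
    refine ⟨⟨x / a, ?_⟩, rfl⟩
    rw [norm_div, ha2]
    linarith
  -- Write `x / a = n + 2 w` with `n ∈ {0, 1}` and `w ∈ ℤ₂`.
  obtain ⟨n, hn, hmem⟩ := PadicInt.exists_mem_range (p := 2) u
  rw [PadicInt.maximalIdeal_eq_span_p, Ideal.mem_span_singleton] at hmem
  obtain ⟨w, hw⟩ := hmem
  have hw' : x / a - n = 2 * (w : ℚ_[2]) := by
    have := congrArg ((↑) : ℤ_[2] → ℚ_[2]) hw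
    rw [PadicInt.coe_sub, PadicInt.coe_mul, PadicInt.coe_natCast, PadicInt.coe_natCast,
      hu] at this
    exact_mod_cast this
  have hx' : x = n * a + 2 * a * w := by
    have h3 : x = x / a * a := by field_simp
    rw [h3]
    linear_combination a * hw'
  have hint : ψ (2 * a * w) = 1 := by
    apply hψtriv
    rw [norm_mul, ha, one_mul]
    exact w.2
  apply hne
  rw [hx', hψadd, hint, mul_one]
  interval_cases n
  · simpa using hψtriv 0 (by simp)
  · simpa using h1

/-- Let `μ` be the Haar measure on `ℚ₂` normalized so that `μ(ℤ₂) = 1`,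
and `ψ` a continuous unitary additive character of `ℚ₂` trivial on `ℤ₂` but nontrivial on
`(1/2)ℤ₂`.  Then for every `a ∈ ℚ₂` with `2a ∈ ℤ₂ˣ`, `∫_{ℤ₂} ψ (a x²) dμ(x) = 0`. -/
theorem padic2_gauss_sum_vanishes
    [MeasurableSpace ℚ_[2]] [BorelSpace ℚ_[2]]
    (μ : Measure ℚ_[2]) [μ.IsAddHaarMeasure]
    (hμ : μ {x : ℚ_[2] | ‖x‖ ≤ 1} = 1)
    (ψ : ℚ_[2] → ℂ)
    (hψcont : Continuous ψ)
    (hψadd : ∀ x y : ℚ_[2], ψ (x + y) = ψ x * ψ y)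
    (hψnorm : ∀ x : ℚ_[2], ‖ψ x‖ = 1)
    (hψtriv : ∀ x : ℚ_[2], ‖x‖ ≤ 1 → ψ x = 1)
    (hψnontriv : ∃ x : ℚ_[2], ‖x‖ ≤ 2 ∧ ψ x ≠ 1)
    (a : ℚ_[2]) (ha : ‖2 * a‖ = 1) :
    (∫ x in {y : ℚ_[2] | ‖y‖ ≤ 1}, ψ (a * x ^ 2) ∂μ) = 0 := by
  have hball : ∀ x : ℚ_[2], ‖x + 1‖ ≤ 1 ↔ ‖x‖ ≤ 1 := by
    intro x
    constructor
    · intro h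
      have := Padic.nonarchimedean (x + 1) (-1)
      rw [add_neg_cancel_right, norm_neg, norm_one] at this
      exact this.trans (max_le h le_rfl)
    · intro h
      have := Padic.nonarchimedean x 1
      rw [norm_one] at this
      exact this.trans (max_le h le_rfl)
  have hmeas : MeasurableSet {y : ℚ_[2] | ‖y‖ ≤ 1} :=
    (isClosed_le continuous_norm continuous_const).measurableSet
  have hI : (∫ x in {y : ℚ_[2] | ‖y‖ ≤ 1}, ψ (a * x ^ 2) ∂μ)
      = ψ a * ∫ x in {y : ℚ_[2] | ‖y‖ ≤ 1}, ψ (a * x ^ 2) ∂μ := by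
    rw [← integral_indicator hmeas, ← integral_const_mul]
    conv_lhs => rw [← integral_add_right_eq_self _ (1 : ℚ_[2])]
    refine integral_congr_ae (Filter.Eventually.of_forall fun x => ?_)
    by_cases hx : ‖x‖ ≤ 1
    · have h1 : x + 1 ∈ {y : ℚ_[2] | ‖y‖ ≤ 1} := (hball x).2 hx
      have h0 : x ∈ {y : ℚ_[2] | ‖y‖ ≤ 1} := hx
      have hsq : a * (x + 1) ^ 2 = a + a * x ^ 2 + 2 * a * x := by ring
      have hint : ψ (2 * a * x) = 1 := by
        apply hψtriv
        rwa [norm_mul, ha, one_mul]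
      simp only [Set.indicator_of_mem h1, Set.indicator_of_mem h0]
      rw [hsq, hψadd, hψadd, hint, mul_one]
    · have h1 : x + 1 ∉ {y : ℚ_[2] | ‖y‖ ≤ 1} := fun h => hx ((hball x).1 h)
      have h0 : x ∉ {y : ℚ_[2] | ‖y‖ ≤ 1} := hx
      simp only [Set.indicator_of_notMem h1, Set.indicator_of_notMem h0, mul_zero]
  by_contra hne
  exact psi_ne_one_of_norm ψ hψadd hψtriv hψnontriv a ha
    (mul_right_cancel₀ hne (by rw [one_mul]; exact hI.symm))
end

section
/- Let p be a prime, μ the Haar measure on the additive group ℚ_p normalized so that μ(ℤ_p) = 1, and ψ : ℚ_p → ℂˣ a continuous additive character with values in the unit circle that is trivial on ℤ_p but nontrivial on p⁻¹ℤ_p. Then for every x ∈ ℚ_p, ∫_{ℤ_pˣ} ψ(x·y) dμ(y) = 1 − p⁻¹ if x ∈ ℤ_p; = −p⁻¹ if p·x ∈ ℤ_pˣ; and = 0 otherwise. -/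
open MeasureTheory
open scoped Classical

/-!
The unit sphere is `ℤ_p` with the open unit ball `pℤ_p` removed, so the integral is the difference
of the integrals of `y ↦ ψ (x y)` over these two balls. Each ball is an additive subgroup, and by
translation invariance a character nontrivial on a subgroup integrates to `0` over it
(`integral_subgroup_eq_zero`), whereas a trivial one gives the measure of the subgroup. Those
measures are `1` and `p⁻¹`, since `ℤ_p` is a disjoint union of `p` translates of `pℤ_p`
(`measureReal_open_unit_ball`).

If `‖x‖ ≤ 1` the character `y ↦ ψ (x y)` is trivial on both balls. If `‖x‖ = p` it is trivial on
`pℤ_p` but not on `ℤ_p`, and if `‖x‖ > p` it is nontrivial on both: when `ψ x₀ ≠ 1` with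
`‖x₀‖ ≤ p`, the point `x₀ / x` witnesses this.
-/

/-- The index of `pℤ_p` in `ℤ_p` is `p`, with coset representatives `0, …, p - 1`. -/
lemma measureReal_open_unit_ball (p : ℕ) [Fact p.Prime]
    [MeasurableSpace ℚ_[p]] [BorelSpace ℚ_[p]]
    (μ : Measure ℚ_[p]) [μ.IsAddHaarMeasure]
    (hμ : μ {x : ℚ_[p] | ‖x‖ ≤ 1} = 1) :
    μ.real {x : ℚ_[p] | ‖x‖ < 1} = (p : ℝ)⁻¹ := by
  have hp : (p : ℝ) ≠ 0 := by exact_mod_cast (Fact.out : p.Prime).ne_zero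
  have hB : MeasurableSet {x : ℚ_[p] | ‖x‖ < 1} :=
    (isOpen_lt continuous_norm continuous_const).measurableSet
  have hcover : {x : ℚ_[p] | ‖x‖ ≤ 1}
      = ⋃ i ∈ Finset.range p, (fun z : ℚ_[p] => z + (-(i : ℚ_[p]))) ⁻¹' {x | ‖x‖ < 1} := by
    ext z
    simp only [Set.mem_ofPred_eq, Set.mem_iUnion, Set.mem_preimage, Finset.mem_range, exists_prop]
    constructor
    · intro hz
      obtain ⟨w, rfl⟩ : ∃ w : ℤ_[p], (w : ℚ_[p]) = z := ⟨⟨z, hz⟩, rfl⟩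
      obtain ⟨n, hn, h⟩ := PadicInt.exists_mem_range w
      refine ⟨n, hn, ?_⟩
      rw [IsLocalRing.mem_maximalIdeal, PadicInt.mem_nonunits, PadicInt.norm_def] at h
      rw [← sub_eq_add_neg]
      simpa only [PadicInt.coe_sub, PadicInt.coe_natCast] using h
    · rintro ⟨i, -, h⟩
      have h1 : z = (z + (-(i : ℚ_[p]))) + (i : ℤ) := by push_cast; ring
      rw [h1]
      exact (Padic.nonarchimedean _ _).trans (max_le h.le (Padic.norm_int_le_one _))
  have hdisj : Set.PairwiseDisjoint (↑(Finset.range p) : Set ℕ)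
      (fun i : ℕ => (fun z : ℚ_[p] => z + (-(i : ℚ_[p]))) ⁻¹' {x | ‖x‖ < 1}) := by
    intro i hi j hj hij
    refine Set.disjoint_left.2 fun z h1 h2 => hij ?_
    simp only [Set.mem_ofPred_eq, Set.mem_preimage] at h1 h2
    simp only [Finset.coe_range, Set.mem_Iio] at hi hj
    have h3 : ‖(((i : ℤ) - (j : ℤ) : ℤ) : ℚ_[p])‖ < 1 := by
      have : (((i : ℤ) - (j : ℤ) : ℤ) : ℚ_[p])
          = (z + (-(j : ℚ_[p]))) - (z + (-(i : ℚ_[p]))) := by push_cast; ring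
      rw [this, sub_eq_add_neg]
      refine (Padic.nonarchimedean _ _).trans_lt (max_lt h2 ?_)
      rwa [norm_neg]
    rw [Padic.norm_intCast_lt_one_iff] at h3
    have h4 := Int.eq_zero_of_abs_lt_dvd h3 (by rw [abs_lt]; omega)
    omega
  have hsum : (1 : ENNReal) = p * μ {x : ℚ_[p] | ‖x‖ < 1} := by
    rw [← hμ, hcover, measure_biUnion_finset hdisj
      fun i _ => (measurable_add_const _) hB]
    simp only [measure_preimage_add_right, Finset.sum_const, Finset.card_range, nsmul_eq_mul]
  have h := congrArg ENNReal.toReal hsum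
  rw [ENNReal.toReal_mul] at h
  simp only [ENNReal.toReal_one, ENNReal.toReal_natCast] at h
  rw [Measure.real]
  field_simp
  linarith

/-- Orthogonality: translating by `a` multiplies the integral by `χ a ≠ 1`. -/
lemma integral_subgroup_eq_zero {G : Type*} [AddCommGroup G] [MeasurableSpace G]
    [MeasurableAdd G] (μ : Measure G) [μ.IsAddRightInvariant]
    (χ : G → ℂ) (hχ : ∀ y z, χ (y + z) = χ y * χ z)
    (S : Set G) (hS : MeasurableSet S) (a : G) (haS : ∀ y, y + a ∈ S ↔ y ∈ S) (ha : χ a ≠ 1) :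
    ∫ y in S, χ y ∂μ = 0 := by
  have h : ∫ y in S, χ y ∂μ = (∫ y in S, χ y ∂μ) * χ a := by
    rw [← integral_mul_const, ← integral_indicator hS, ← integral_indicator hS,
      ← integral_add_right_eq_self _ a]
    refine integral_congr_ae (.of_forall fun y => ?_)
    simp only [Set.indicator, haS, hχ]
  by_contra h0
  exact ha (mul_left_cancel₀ h0 (by rw [mul_one]; exact h.symm))

/-- Let `p` be a prime, `μ` the Haar measure on `ℚ_p` normalized so that
`μ(ℤ_p) = 1`, and `ψ` a continuous unitary additive character of `ℚ_p` trivial on `ℤ_p` but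
nontrivial on `p⁻¹ℤ_p`.  Then for every `x ∈ ℚ_p`, `∫_{ℤ_pˣ} ψ (x y) dμ(y)` equals
`1 − p⁻¹` if `x ∈ ℤ_p`, `−p⁻¹` if `p x ∈ ℤ_pˣ`, and `0` otherwise. -/
theorem padic_character_integral_over_units
    (p : ℕ) [Fact p.Prime]
    [MeasurableSpace ℚ_[p]] [BorelSpace ℚ_[p]]
    (μ : Measure ℚ_[p]) [μ.IsAddHaarMeasure]
    (hμ : μ {x : ℚ_[p] | ‖x‖ ≤ 1} = 1)
    (ψ : ℚ_[p] → ℂ)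
    (hψcont : Continuous ψ)
    (hψadd : ∀ x y : ℚ_[p], ψ (x + y) = ψ x * ψ y)
    (hψnorm : ∀ x : ℚ_[p], ‖ψ x‖ = 1)
    (hψtriv : ∀ x : ℚ_[p], ‖x‖ ≤ 1 → ψ x = 1)
    (hψnontriv : ∃ x : ℚ_[p], ‖x‖ ≤ p ∧ ψ x ≠ 1)
    (x : ℚ_[p]) :
    (∫ y in {z : ℚ_[p] | ‖z‖ = 1}, ψ (x * y) ∂μ)
      = if ‖x‖ ≤ 1 then 1 - (p : ℂ)⁻¹
        else if ‖(p : ℚ_[p]) * x‖ = 1 then -(p : ℂ)⁻¹ else 0 := by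
  have hp : (0 : ℝ) < p := by exact_mod_cast (Fact.out : p.Prime).pos
  set A : Set ℚ_[p] := {z | ‖z‖ ≤ 1} with hA
  set B : Set ℚ_[p] := {z | ‖z‖ < 1} with hB
  have hAm : MeasurableSet A := (isClosed_le continuous_norm continuous_const).measurableSet
  have hBm : MeasurableSet B := (isOpen_lt continuous_norm continuous_const).measurableSet
  have hBA : B ⊆ A := fun z (hz : ‖z‖ < 1) => show ‖z‖ ≤ 1 from hz.le
  have hμB : μ.real B = (p : ℝ)⁻¹ := measureReal_open_unit_ball p μ hμ
  have hμA : μ.real A = 1 := by rw [Measure.real, hμ, ENNReal.toReal_one]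
  have hunits : {z : ℚ_[p] | ‖z‖ = 1} = A \ B := by
    ext z
    simp only [hA, hB, Set.mem_ofPred_eq, Set.mem_sdiff, not_lt]
    exact le_antisymm_iff
  have hint : IntegrableOn (fun y => ψ (x * y)) A μ := by
    have hAc : IsCompact A := by
      have : A = Metric.closedBall 0 1 := by ext z; simp [hA]
      rw [this]
      exact isCompact_closedBall _ _
    exact (hψcont.comp (continuous_const.mul continuous_id)).continuousOn.integrableOn_compact hAc
  have hadd : ∀ y z, ψ (x * (y + z)) = ψ (x * y) * ψ (x * z) := fun y z => by
    rw [mul_add, hψadd]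
  have hAt : ∀ a ∈ A, ∀ y, y + a ∈ A ↔ y ∈ A := by
    intro a ha y
    refine ⟨fun h => ?_, fun h => (Padic.nonarchimedean _ _).trans (max_le h ha)⟩
    have h1 : y = (y + a) + (-a) := by ring
    rw [h1]
    exact (Padic.nonarchimedean _ _).trans (max_le h (by rwa [norm_neg]))
  have hBt : ∀ a ∈ B, ∀ y, y + a ∈ B ↔ y ∈ B := by
    intro a ha y
    refine ⟨fun h => ?_, fun h => (Padic.nonarchimedean _ _).trans_lt (max_lt h ha)⟩
    have h1 : y = (y + a) + (-a) := by ring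
    rw [h1]
    exact (Padic.nonarchimedean _ _).trans_lt (max_lt h (by rwa [norm_neg]))
  have htriv : ∀ S : Set ℚ_[p], MeasurableSet S → (∀ y ∈ S, ‖x * y‖ ≤ 1) →
      ∫ y in S, ψ (x * y) ∂μ = (μ.real S : ℂ) := by
    intro S hS h
    rw [setIntegral_congr_fun hS (g := fun _ => (1 : ℂ)) fun y hy => hψtriv _ (h y hy)]
    simp
  rw [hunits, setIntegral_sdiff hBm hint hBA]
  obtain ⟨x₀, hx₀, hne⟩ := hψnontriv
  have hpx : ‖(p : ℚ_[p]) * x‖ = ‖x‖ / p := by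
    rw [norm_mul, Padic.norm_p]; field_simp
  -- The norm takes no value strictly between `p⁻¹` and `1`.
  have hdisc : ∀ y : ℚ_[p], ‖y‖ < 1 → ‖y‖ ≤ (p : ℝ)⁻¹ := by
    intro y hy
    have := (Padic.norm_le_pow_iff_norm_lt_pow_add_one y (-1)).2 (by simpa using hy)
    simpa using this
  split_ifs with h1 h2
  · have hle : ∀ y ∈ A, ‖x * y‖ ≤ 1 := fun y hy => by
      rw [norm_mul]; exact mul_le_one₀ h1 (norm_nonneg _) hy
    rw [htriv A hAm hle, htriv B hBm fun y hy => hle y (hBA hy), hμA, hμB]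
    push_cast
    ring
  · rw [hpx, div_eq_one_iff_eq hp.ne'] at h2
    have hx : x ≠ 0 := by rintro rfl; simp at h1
    have ha : x₀ / x ∈ A := by
      change ‖x₀ / x‖ ≤ 1
      rw [norm_div, h2]
      exact (div_le_one hp).2 hx₀
    rw [integral_subgroup_eq_zero μ (fun y => ψ (x * y)) hadd A hAm _ (hAt _ ha)
      (by simpa only [mul_div_cancel₀ _ hx] using hne), htriv B hBm, hμB]
    · push_cast
      ring
    · intro y hy
      rw [norm_mul, h2]
      calc (p : ℝ) * ‖y‖ ≤ p * (p : ℝ)⁻¹ := by gcongr; exact hdisc y hy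
        _ = 1 := mul_inv_cancel₀ hp.ne'
  · have hx : x ≠ 0 := by rintro rfl; simp at h1
    have hxp : (p : ℝ) < ‖x‖ := by
      have h3 := hdisc x⁻¹ (by rw [norm_inv]; exact inv_lt_one_of_one_lt₀ (not_le.1 h1))
      rw [norm_inv, inv_le_inv₀ (norm_pos_iff.2 hx) hp] at h3
      refine lt_of_le_of_ne h3 fun h => h2 ?_
      rw [hpx, ← h, div_self hp.ne']
    have ha : x₀ / x ∈ B := by
      change ‖x₀ / x‖ < 1
      rw [norm_div]
      exact (div_lt_one (hp.trans hxp)).2 (hx₀.trans_lt hxp)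
    have hne' : ψ (x * (x₀ / x)) ≠ 1 := by
      rwa [mul_div_cancel₀ _ hx]
    rw [integral_subgroup_eq_zero μ (fun y => ψ (x * y)) hadd A hAm _ (hAt _ (hBA ha)) hne',
      integral_subgroup_eq_zero μ (fun y => ψ (x * y)) hadd B hBm _ (hBt _ ha) hne', sub_zero]
end

section
/- Let q > 1 be a real number and let α, β be complex numbers with |α| = |β| = 1 and α ≠ β. Then the series Σ_{i=0}^∞ q^{−i}·(α^{i+1} − β^{i+1})·(α^{−i−1} − β^{−i−1}) converges and Σ_{i=0}^∞ q^{−i}·(α^{i+1} − β^{i+1})·(α^{−i−1} − β^{−i−1}) / ((α − β)·(α^{−1} − β^{−1})) = (1 + q^{−1}) / ((1 − q^{−1})·(1 − α·β^{−1}·q^{−1})·(1 − α^{−1}·β·q^{−1})). -/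
/-! With `x = q⁻¹`, `u = αβ⁻¹`, `v = α⁻¹β` (so `uv = 1`), the `i`-th term expands to
`2xⁱ - u(ux)ⁱ - v(vx)ⁱ`, a combination of three geometric series whose ratios have norm `q⁻¹ < 1`.
The sum `2/(1-x) - u/(1-ux) - v/(1-vx)` equals `(2-u-v)(1+x) / ((1-x)(1-ux)(1-vx))`, and
`2-u-v = (α-β)(α⁻¹-β⁻¹)` is the nonzero factor divided out. -/

/-- Let `q > 1` be real and `α β` complex numbers of norm one with `α ≠ β`.
Then `Σ_{i=0}^∞ q^{−i}(α^{i+1} − β^{i+1})(α^{−i−1} − β^{−i−1})` converges, and dividing the sum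
by `(α − β)(α⁻¹ − β⁻¹)` gives
`(1 + q⁻¹) / ((1 − q⁻¹)(1 − αβ⁻¹q⁻¹)(1 − α⁻¹βq⁻¹))`. -/
theorem whittaker_norm_series (q : ℝ) (hq : 1 < q) (α β : ℂ)
    (hα : ‖α‖ = 1) (hβ : ‖β‖ = 1) (hαβ : α ≠ β) :
    Summable (fun i : ℕ =>
        ((q : ℂ))⁻¹ ^ i * (α ^ (i + 1) - β ^ (i + 1)) * (α⁻¹ ^ (i + 1) - β⁻¹ ^ (i + 1))) ∧
    (∑' i : ℕ,
        ((q : ℂ))⁻¹ ^ i * (α ^ (i + 1) - β ^ (i + 1)) * (α⁻¹ ^ (i + 1) - β⁻¹ ^ (i + 1))) /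
        ((α - β) * (α⁻¹ - β⁻¹))
      = (1 + (q : ℂ)⁻¹) /
          ((1 - (q : ℂ)⁻¹) * (1 - α * β⁻¹ * (q : ℂ)⁻¹) * (1 - α⁻¹ * β * (q : ℂ)⁻¹)) := by
  have hα0 : α ≠ 0 := norm_ne_zero_iff.mp (by rw [hα]; exact one_ne_zero)
  have hβ0 : β ≠ 0 := norm_ne_zero_iff.mp (by rw [hβ]; exact one_ne_zero)
  have hD : (α - β) * (α⁻¹ - β⁻¹) ≠ 0 :=
    mul_ne_zero (sub_ne_zero.mpr hαβ) (sub_ne_zero.mpr (inv_injective.ne hαβ))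
  have hx : ‖(q : ℂ)⁻¹‖ < 1 := by
    rw [norm_inv, Complex.norm_real, Real.norm_of_nonneg (by linarith)]
    exact inv_lt_one_of_one_lt₀ hq
  generalize (q : ℂ)⁻¹ = x at hx ⊢
  have hux : ‖α * β⁻¹ * x‖ < 1 := by simpa [hα, hβ] using hx
  have hvx : ‖α⁻¹ * β * x‖ < 1 := by simpa [hα, hβ] using hx
  have ne_of_norm : ∀ z : ℂ, ‖z‖ < 1 → 1 - z ≠ 0 := by
    rintro z hz h
    rw [← sub_eq_zero.mp h, norm_one] at hz
    exact lt_irrefl _ hz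
  have h1 := ne_of_norm _ hx
  have h2 := ne_of_norm _ hux
  have h3 := ne_of_norm _ hvx
  have hαi : α * α⁻¹ = 1 := mul_inv_cancel₀ hα0
  have hβi : β * β⁻¹ = 1 := mul_inv_cancel₀ hβ0
  generalize α⁻¹ = a at *
  generalize β⁻¹ = b at *
  have hsum := (((hasSum_geometric_of_norm_lt_one hx).mul_left 2).sub
    ((hasSum_geometric_of_norm_lt_one hux).mul_left (α * b))).sub
    ((hasSum_geometric_of_norm_lt_one hvx).mul_left (a * β))
  have hterm : (fun i : ℕ => x ^ i * (α ^ (i + 1) - β ^ (i + 1)) * (a ^ (i + 1) - b ^ (i + 1)))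
      = fun i : ℕ => 2 * x ^ i - α * b * (α * b * x) ^ i - a * β * (a * β * x) ^ i := by
    funext i
    have e1 : α ^ (i + 1) * a ^ (i + 1) = 1 := by rw [← mul_pow, hαi, one_pow]
    have e2 : β ^ (i + 1) * b ^ (i + 1) = 1 := by rw [← mul_pow, hβi, one_pow]
    simp only [mul_pow]
    linear_combination x ^ i * e1 + x ^ i * e2
  rw [← hterm] at hsum
  refine ⟨hsum.summable, ?_⟩
  have huv : (α * b) * (a * β) = 1 := by linear_combination β * b * hαi + hβi
  have hDuv : (α - β) * (a - b) = 2 - α * b - a * β := by linear_combination hαi + hβi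
  rw [hsum.tsum_eq, div_eq_div_iff hD (mul_ne_zero (mul_ne_zero h1 h2) h3), hDuv]
  generalize α * b = u at *
  generalize a * β = v at *
  linear_combination 2 * (1 - u * x) * (1 - v * x) * inv_mul_cancel₀ h1
    - u * (1 - x) * (1 - v * x) * inv_mul_cancel₀ h2
    - v * (1 - x) * (1 - u * x) * inv_mul_cancel₀ h3 + 2 * x * huv
end

section
/- Let q > 1 be a real number and let γ be a complex number with |γ| = 1 and γ ≠ 1. Then the series Σ_{i=1}^∞ q^{−i}·(γ^i·(1 − γ^{−1}q^{−1})/(1 − γ^{−1}) + γ^{−i}·(1 − γq^{−1})/(1 − γ)) converges and 1 + Σ_{i=1}^∞ q^{−i}·(γ^i·(1 − γ^{−1}q^{−1})/(1 − γ^{−1}) + γ^{−i}·(1 − γq^{−1})/(1 − γ)) = (1 + q^{−1})·(1 − q^{−2}) / ((1 − γq^{−1})·(1 − γ^{−1}q^{−1})). -/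
/-!
Put `x = q⁻¹`, so that `‖γ x‖ = ‖γ⁻¹ x‖ = ‖x‖ < 1`. The series is a linear combination of the two
geometric series with ratios `γ x` and `γ⁻¹ x`, hence sums to
`A γ x / (1 - γ x) + B γ⁻¹ x / (1 - γ⁻¹ x)` with `A = (1 - γ⁻¹ x) / (1 - γ⁻¹)` and
`B = (1 - γ x) / (1 - γ)`. The closed form is then an identity of rational functions in `γ`, `x`.
-/

/-- A geometric series started at its linear term. -/
lemma hasSum_geometric_succ {z : ℂ} (hz : ‖z‖ < 1) :
    HasSum (fun i : ℕ => z ^ (i + 1)) (z * (1 - z)⁻¹) := by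
  simpa only [pow_succ'] using (hasSum_geometric_of_norm_lt_one hz).mul_left z

/-- The rational function identity behind the evaluation, with `x` in the role of `q⁻¹`. -/
lemma doubling_rational_identity {γ x : ℂ} (h0 : γ ≠ 0) (h1 : γ ≠ 1)
    (ha : 1 - γ * x ≠ 0) (hb : 1 - γ⁻¹ * x ≠ 0) :
    1 + (γ * x * (1 - γ * x)⁻¹ * ((1 - γ⁻¹ * x) / (1 - γ⁻¹)) +
        γ⁻¹ * x * (1 - γ⁻¹ * x)⁻¹ * ((1 - γ * x) / (1 - γ)))
      = (1 + x) * (1 - x ^ 2) / ((1 - γ * x) * (1 - γ⁻¹ * x)) := by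
  have hc : γ - 1 ≠ 0 := sub_ne_zero.mpr h1
  -- Clearing the inner inverses leaves only the denominators `γ - 1`, `γ - x` and `1 - γ x`.
  have e1 : 1 - γ⁻¹ * x = (γ - x) / γ := by field_simp
  have e2 : 1 - γ⁻¹ = (γ - 1) / γ := by field_simp
  have e3 : 1 - γ = -(γ - 1) := by ring
  have hd : γ - x ≠ 0 := by
    intro h
    rw [e1, h, zero_div] at hb
    exact hb rfl
  rw [e1, e2, e3]
  field_simp
  ring

/-- Let `q > 1` be real and `γ` a complex number of norm one with `γ ≠ 1`.
Then the series `Σ_{i=1}^∞ q^{−i}(γ^i (1−γ⁻¹q⁻¹)/(1−γ⁻¹) + γ^{−i} (1−γq⁻¹)/(1−γ))` converges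
and adding `1` to its sum gives `(1+q⁻¹)(1−q⁻²)/((1−γq⁻¹)(1−γ⁻¹q⁻¹))`. -/
theorem unramified_doubling_series (q : ℝ) (hq : 1 < q) (γ : ℂ)
    (hγ : ‖γ‖ = 1) (hγ1 : γ ≠ 1) :
    Summable (fun i : ℕ =>
        ((q : ℂ))⁻¹ ^ (i + 1) *
          (γ ^ (i + 1) * ((1 - γ⁻¹ * (q : ℂ)⁻¹) / (1 - γ⁻¹)) +
            γ⁻¹ ^ (i + 1) * ((1 - γ * (q : ℂ)⁻¹) / (1 - γ)))) ∧
    1 + (∑' i : ℕ,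
        ((q : ℂ))⁻¹ ^ (i + 1) *
          (γ ^ (i + 1) * ((1 - γ⁻¹ * (q : ℂ)⁻¹) / (1 - γ⁻¹)) +
            γ⁻¹ ^ (i + 1) * ((1 - γ * (q : ℂ)⁻¹) / (1 - γ))))
      = (1 + (q : ℂ)⁻¹) * (1 - (q : ℂ)⁻¹ ^ 2) /
          ((1 - γ * (q : ℂ)⁻¹) * (1 - γ⁻¹ * (q : ℂ)⁻¹)) := by
  have h0 : γ ≠ 0 := by
    rintro rfl
    simp at hγ
  have hx : ‖(q : ℂ)⁻¹‖ < 1 := by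
    rw [norm_inv, Complex.norm_real, Real.norm_of_nonneg (by linarith)]
    exact inv_lt_one_of_one_lt₀ hq
  have ha : ‖γ * (q : ℂ)⁻¹‖ < 1 := by rwa [norm_mul, hγ, one_mul]
  have hb : ‖γ⁻¹ * (q : ℂ)⁻¹‖ < 1 := by rwa [norm_mul, norm_inv, hγ, inv_one, one_mul]
  have one_sub_ne : ∀ z : ℂ, ‖z‖ < 1 → 1 - z ≠ 0 := by
    intro z hz h
    rw [← sub_eq_zero.mp h, norm_one] at hz
    exact lt_irrefl _ hz
  have hs := ((hasSum_geometric_succ ha).mul_right ((1 - γ⁻¹ * (q : ℂ)⁻¹) / (1 - γ⁻¹))).add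
    ((hasSum_geometric_succ hb).mul_right ((1 - γ * (q : ℂ)⁻¹) / (1 - γ)))
  have hterm : ∀ (A B : ℂ), (fun i : ℕ => (γ * (q : ℂ)⁻¹) ^ (i + 1) * A +
      (γ⁻¹ * (q : ℂ)⁻¹) ^ (i + 1) * B) =
      fun i : ℕ => (q : ℂ)⁻¹ ^ (i + 1) * (γ ^ (i + 1) * A + γ⁻¹ ^ (i + 1) * B) := by
    intro A B
    funext i
    rw [mul_pow, mul_pow]
    ring
  rw [hterm] at hs
  refine ⟨hs.summable, ?_⟩
  rw [hs.tsum_eq]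
  exact doubling_rational_identity h0 hγ1 (one_sub_ne _ ha) (one_sub_ne _ hb)
end

section
/- For every non-negative integer k and every real number v > 0, ∫_{ℝ⁴} (x₂² + v²·x₁²)^k · exp(−(π/v)·(x₂² + v²·x₁² + x₄² + v²·x₃²)) dx₁ dx₂ dx₃ dx₄ = k! · v^k / π^k. -/
open MeasureTheory

/-!
The substitution `y = (v x₀, x₁, v x₂, x₃)`, of Jacobian `v²`, makes the integrand rotation
invariant in each of the planes `(y₀, y₁)` and `(y₂, y₃)`, so the integral splits as `v⁻²` times
a product of two planar integrals. Each of these is a Gaussian moment, which polar coordinates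
turn into a Gamma integral (`integral_plane_moment`): `∫ r^(2k) exp (-b r²) = π k! / b^(k+1)`.
The claim is the case `b = π / v`, with exponent `k` in the first plane and `0` in the second.
-/

lemma integral_plane_moment (k : ℕ) {b : ℝ} (hb : 0 < b) :
    ∫ p : ℝ × ℝ, (p.1 ^ 2 + p.2 ^ 2) ^ k * Real.exp (-b * (p.1 ^ 2 + p.2 ^ 2))
      = Real.pi * k.factorial / b ^ (k + 1) := by
  have hradial : ∫ r in Set.Ioi (0 : ℝ), r ^ (2 * k + 1) * Real.exp (-b * r ^ 2)
      = k.factorial / (2 * b ^ (k + 1)) := by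
    have h := integral_rpow_mul_exp_neg_mul_rpow (p := 2) (q := ((2 * k + 1 : ℕ) : ℝ)) two_pos
      (by linarith [Nat.cast_nonneg (α := ℝ) (2 * k + 1)]) hb
    have he : (((2 * k + 1 : ℕ) : ℝ) + 1) / 2 = ((k + 1 : ℕ) : ℝ) := by push_cast; ring
    rw [neg_div, he, Real.rpow_neg hb.le] at h
    have hG : Real.Gamma ((k + 1 : ℕ) : ℝ) = k.factorial := by
      rw [Nat.cast_succ, Real.Gamma_nat_eq_factorial]
    rw [hG] at h
    simp only [Real.rpow_natCast, Real.rpow_two] at h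
    rw [h]
    field_simp
  rw [← integral_comp_polarCoord_symm, polarCoord_target]
  have hpt : ∀ q : ℝ × ℝ, q.1 • (((polarCoord.symm q).1 ^ 2 + (polarCoord.symm q).2 ^ 2) ^ k *
      Real.exp (-b * ((polarCoord.symm q).1 ^ 2 + (polarCoord.symm q).2 ^ 2)))
      = (q.1 ^ (2 * k + 1) * Real.exp (-b * q.1 ^ 2)) * 1 := by
    intro q
    have : (polarCoord.symm q).1 ^ 2 + (polarCoord.symm q).2 ^ 2 = q.1 ^ 2 := by
      simp only [polarCoord_symm_apply]
      linear_combination q.1 ^ 2 * Real.sin_sq_add_cos_sq q.2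
    rw [this, smul_eq_mul]
    ring
  simp only [hpt]
  rw [Measure.volume_eq_prod,
    setIntegral_prod_mul (fun r : ℝ => r ^ (2 * k + 1) * Real.exp (-b * r ^ 2)) (fun _ => (1 : ℝ)),
    hradial]
  have : ∫ _ in Set.Ioo (-Real.pi) Real.pi, (1 : ℝ) = 2 * Real.pi := by
    simp [Real.pi_pos.le]
    ring
  rw [this]
  field_simp

lemma integral_plane_moment_pi (k : ℕ) {b : ℝ} (hb : 0 < b) :
    ∫ p : Fin 2 → ℝ, (p 0 ^ 2 + p 1 ^ 2) ^ k * Real.exp (-b * (p 0 ^ 2 + p 1 ^ 2))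
      = Real.pi * k.factorial / b ^ (k + 1) := by
  rw [← integral_plane_moment k hb]
  exact (volume_preserving_finTwoArrow ℝ).integral_comp' (fun p : ℝ × ℝ =>
    (p.1 ^ 2 + p.2 ^ 2) ^ k * Real.exp (-b * (p.1 ^ 2 + p.2 ^ 2)))

/-- Fubini for `ℝ⁴ = ℝ² × ℝ²`; no integrability is needed for a product integrand. -/
lemma integral_fin_four_mul (f g : (Fin 2 → ℝ) → ℝ) :
    ∫ x : Fin 4 → ℝ, f ![x 0, x 1] * g ![x 2, x 3] = (∫ p, f p) * ∫ q, g q := by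
  have h1 := (volume_measurePreserving_piCongrLeft (fun _ : Fin 4 => ℝ)
    (finSumFinEquiv : Fin 2 ⊕ Fin 2 ≃ Fin 4)).integral_comp'
      (fun x : Fin 4 → ℝ => f ![x 0, x 1] * g ![x 2, x 3])
  have h2 := (volume_measurePreserving_sumPiEquivProdPi
    (fun _ : Fin 2 ⊕ Fin 2 => ℝ)).integral_comp'
      (fun p : (Fin 2 → ℝ) × (Fin 2 → ℝ) => f p.1 * g p.2)
  rw [← h1, ← integral_prod_mul f g]
  refine Eq.trans ?_ h2
  congr 1
  funext y
  congr 2 <;> (funext i; fin_cases i <;> rfl)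

/-- For `v > 0`, rescaling the coordinates `x 0` and `x 2` by `v` has Jacobian `v ^ 2`. -/
lemma integral_fin_four_scale {v : ℝ} (hv : 0 < v) (F : (Fin 4 → ℝ) → ℝ) (hF : Continuous F) :
    ∫ x : Fin 4 → ℝ, F x = v ^ 2 * ∫ x : Fin 4 → ℝ, F ![v * x 0, x 1, v * x 2, x 3] := by
  have hdet : (Matrix.diagonal ![v, 1, v, 1]).det = v ^ 2 := by
    simp [Matrix.det_diagonal, Fin.prod_univ_four, sq]
  have h := Real.smul_map_diagonal_volume_pi (D := ![v, 1, v, 1])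
    (by rw [hdet]; positivity)
  rw [hdet, abs_of_pos (by positivity)] at h
  conv_lhs => rw [← h]
  rw [integral_smul_measure, ENNReal.toReal_ofReal (by positivity), smul_eq_mul,
    integral_map (LinearMap.continuous_of_finiteDimensional _).aemeasurable
      hF.aestronglyMeasurable]
  congr 2
  funext x
  congr 1
  funext i
  fin_cases i <;> simp [Matrix.mulVec_diagonal]

/-- For every non-negative integer `k` and every real `v > 0`,
`∫_{ℝ⁴} (x₂² + v²x₁²)^k · exp(−(π/v)(x₂² + v²x₁² + x₄² + v²x₃²)) dx = k! v^k / π^k`. -/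
theorem integral_schwartz_normalization (k : ℕ) (v : ℝ) (hv : 0 < v) :
    ∫ x : Fin 4 → ℝ,
        ((x 1 ^ 2 + v ^ 2 * x 0 ^ 2) ^ k *
          Real.exp (-(Real.pi / v) * (x 1 ^ 2 + v ^ 2 * x 0 ^ 2 + x 3 ^ 2 + v ^ 2 * x 2 ^ 2)))
      = (Nat.factorial k) * v ^ k / Real.pi ^ k := by
  have hb : 0 < Real.pi / v := div_pos Real.pi_pos hv
  let f : ℕ → (Fin 2 → ℝ) → ℝ := fun m p =>
    (p 0 ^ 2 + p 1 ^ 2) ^ m * Real.exp (-(Real.pi / v) * (p 0 ^ 2 + p 1 ^ 2))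
  have hscale := integral_fin_four_scale hv
    (fun x => f k ![x 0, x 1] * f 0 ![x 2, x 3]) (by simp only [f]; simp; fun_prop)
  rw [integral_fin_four_mul, integral_plane_moment_pi k hb, integral_plane_moment_pi 0 hb]
    at hscale
  have hfun : ∀ x : Fin 4 → ℝ, (x 1 ^ 2 + v ^ 2 * x 0 ^ 2) ^ k *
      Real.exp (-(Real.pi / v) * (x 1 ^ 2 + v ^ 2 * x 0 ^ 2 + x 3 ^ 2 + v ^ 2 * x 2 ^ 2))
      = f k ![v * x 0, x 1] * f 0 ![v * x 2, x 3] := by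
    intro x
    simp only [f, Matrix.cons_val_zero, Matrix.cons_val_one, pow_zero, one_mul]
    rw [mul_assoc, ← Real.exp_add]
    congr 2 <;> ring
  simp only [hfun]
  refine mul_left_cancel₀ (pow_ne_zero 2 hv.ne') (hscale.symm.trans ?_)
  have := Real.pi_ne_zero
  simp only [Nat.factorial_zero, Nat.cast_one, div_pow]
  field_simp
  ring
end

section
/- Let p be a prime and n ≥ 1 an integer. The subgroup {g ∈ SL₂(ℤ_p) : the (2,1) entry of g lies in pⁿ·ℤ_p} of SL₂(ℤ_p) has index p^{n−1}·(p+1). -/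
/-!
The left coset of `g` modulo the level `pⁿ` subgroup is determined by its first column `(a, c)`:
`g` and `h`, with first columns `(a, c)` and `(a', c')`, lie in the same left coset iff
`a c' - c a'`, the lower-left entry of `g⁻¹ h`, is divisible by `pⁿ`. Hence the cosets are the
points of `ℙ¹(ℤ/pⁿ)`. Such a point has exactly one representative column of the form
`(1, x)` with `0 ≤ x < pⁿ` (when `a` is a unit) or `(p y, 1)` with `0 ≤ y < pⁿ⁻¹` (when `p ∣ a`, so
that `c` is a unit because the determinant is `1`). Counting them gives
`pⁿ + pⁿ⁻¹ = pⁿ⁻¹ (p + 1)`; the bijection is `cosetRep_bijective`.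
-/

/-- The congruence subgroup of `SL₂(ℤ_p)` of level `pⁿ`, consisting of the matrices whose
lower-left entry is divisible by `pⁿ`. -/
def padicCongruenceSubgroup (p : ℕ) [Fact p.Prime] (n : ℕ) :
    Subgroup (Matrix.SpecialLinearGroup (Fin 2) ℤ_[p]) where
  carrier := {g | (p : ℤ_[p]) ^ n ∣ (g : Matrix (Fin 2) (Fin 2) ℤ_[p]) 1 0}
  one_mem' := by
    simp only [Set.mem_setOf_eq, Matrix.SpecialLinearGroup.coe_one,
      Matrix.one_apply_ne (show (1 : Fin 2) ≠ 0 by decide)]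
    exact dvd_zero _
  mul_mem' := by
    intro a b ha hb
    simp only [Set.mem_setOf_eq] at ha hb ⊢
    have h : ((a * b : Matrix.SpecialLinearGroup (Fin 2) ℤ_[p]) :
        Matrix (Fin 2) (Fin 2) ℤ_[p]) 1 0
        = (a : Matrix (Fin 2) (Fin 2) ℤ_[p]) 1 0 * (b : Matrix (Fin 2) (Fin 2) ℤ_[p]) 0 0
          + (a : Matrix (Fin 2) (Fin 2) ℤ_[p]) 1 1 * (b : Matrix (Fin 2) (Fin 2) ℤ_[p]) 1 0 := by
      rw [Matrix.SpecialLinearGroup.coe_mul, Matrix.mul_apply, Fin.sum_univ_two]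
    rw [h]
    exact dvd_add (ha.mul_right _) (hb.mul_left _)
  inv_mem' := by
    intro a ha
    simp only [Set.mem_setOf_eq] at ha ⊢
    have h : ((a⁻¹ : Matrix.SpecialLinearGroup (Fin 2) ℤ_[p]) :
        Matrix (Fin 2) (Fin 2) ℤ_[p]) 1 0
        = -((a : Matrix (Fin 2) (Fin 2) ℤ_[p]) 1 0) := by
      rw [Matrix.SpecialLinearGroup.coe_inv, Matrix.adjugate_fin_two]
      simp
    rw [h]
    exact dvd_neg.mpr ha

lemma specialLinearGroup_inv_mul_apply {R : Type*} [CommRing R]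
    (g h : Matrix.SpecialLinearGroup (Fin 2) R) :
    (g⁻¹ * h : Matrix.SpecialLinearGroup (Fin 2) R) 1 0 = g 0 0 * h 1 0 - g 1 0 * h 0 0 := by
  change (g⁻¹.1 * h.1) 1 0 = _
  rw [show g⁻¹.1 = Matrix.adjugate g.1 from rfl, Matrix.adjugate_fin_two,
    Matrix.mul_apply, Fin.sum_univ_two]
  change -g 1 0 * h 0 0 + g 0 0 * h 1 0 = _
  ring

lemma padicCongruenceSubgroup_coset_eq_iff {p : ℕ} [Fact p.Prime] {n : ℕ}
    (g h : Matrix.SpecialLinearGroup (Fin 2) ℤ_[p]) :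
    (g : Matrix.SpecialLinearGroup (Fin 2) ℤ_[p] ⧸ padicCongruenceSubgroup p n) = h ↔
      (p : ℤ_[p]) ^ n ∣ g 0 0 * h 1 0 - g 1 0 * h 0 0 := by
  rw [QuotientGroup.eq]
  rw [← specialLinearGroup_inv_mul_apply]
  rfl

/-- Matrices of determinant `1` with first column `(1, x)` for `x < p ^ (m + 1)`, respectively
`(p y, 1)` for `y < p ^ m`. -/
noncomputable def cosetRep (p : ℕ) [Fact p.Prime] (m : ℕ) :
    Fin (p ^ (m + 1)) ⊕ Fin (p ^ m) → Matrix.SpecialLinearGroup (Fin 2) ℤ_[p]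
  | .inl x => ⟨!![1, 0; ((x : ℕ) : ℤ_[p]), 1], by simp⟩
  | .inr y => ⟨!![(p : ℤ_[p]) * ((y : ℕ) : ℤ_[p]), -1; 1, 0], by simp⟩

lemma cosetRep_inl_zero {p : ℕ} [Fact p.Prime] {m : ℕ} (x : Fin (p ^ (m + 1))) :
    cosetRep p m (.inl x) 0 0 = 1 := rfl

lemma cosetRep_inl_one {p : ℕ} [Fact p.Prime] {m : ℕ} (x : Fin (p ^ (m + 1))) :
    cosetRep p m (.inl x) 1 0 = ((x : ℕ) : ℤ_[p]) := rfl

lemma cosetRep_inr_zero {p : ℕ} [Fact p.Prime] {m : ℕ} (y : Fin (p ^ m)) :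
    cosetRep p m (.inr y) 0 0 = (p : ℤ_[p]) * ((y : ℕ) : ℤ_[p]) := rfl

lemma cosetRep_inr_one {p : ℕ} [Fact p.Prime] {m : ℕ} (y : Fin (p ^ m)) :
    cosetRep p m (.inr y) 1 0 = 1 := rfl

lemma eq_of_pow_dvd_natCast_sub {p : ℕ} [Fact p.Prime] {k : ℕ} (x y : Fin (p ^ k))
    (h : (p : ℤ_[p]) ^ k ∣ ((x : ℕ) : ℤ_[p]) - ((y : ℕ) : ℤ_[p])) : x = y := by
  have h' : (p : ℤ_[p]) ^ k ∣ (((x : ℤ) - (y : ℤ) : ℤ) : ℤ_[p]) := by push_cast; exact h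
  rw [PadicInt.pow_p_dvd_int_iff] at h'
  have hm : (y : ℕ) ≡ x [MOD p ^ k] := (Nat.modEq_iff_dvd).2 (by exact_mod_cast h')
  exact Fin.ext (hm.eq_of_lt_of_lt y.2 x.2).symm

lemma exists_fin_pow_dvd_sub {p : ℕ} [Fact p.Prime] (k : ℕ) (z : ℤ_[p]) :
    ∃ x : Fin (p ^ k), (p : ℤ_[p]) ^ k ∣ z - ((x : ℕ) : ℤ_[p]) :=
  ⟨⟨z.appr k, z.appr_lt k⟩, Ideal.mem_span_singleton.1 (PadicInt.appr_spec k z)⟩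

lemma PadicInt.not_isUnit_iff_p_dvd {p : ℕ} [Fact p.Prime] (a : ℤ_[p]) :
    ¬ IsUnit a ↔ (p : ℤ_[p]) ∣ a := by
  rw [← Ideal.mem_span_singleton, ← PadicInt.maximalIdeal_eq_span_p,
    IsLocalRing.mem_maximalIdeal, mem_nonunits_iff]

/-- Applied to `z = x y`, this shows that the columns `(1, x)` and `(p y, 1)` are not proportional
modulo a positive power of `p`. -/
lemma not_pow_succ_dvd_one_sub {p : ℕ} [Fact p.Prime] (m : ℕ) (z : ℤ_[p]) :
    ¬ (p : ℤ_[p]) ^ (m + 1) ∣ 1 - p * z := by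
  intro h
  have h1 : (p : ℤ_[p]) ∣ 1 - p * z := (dvd_pow_self _ m.succ_ne_zero).trans h
  have h2 : (p : ℤ_[p]) ∣ 1 := (dvd_sub_left (dvd_mul_right _ z)).1 h1
  exact (PadicInt.not_isUnit_iff_p_dvd 1).2 h2 isUnit_one

lemma cosetRep_bijective (p : ℕ) [Fact p.Prime] (m : ℕ) :
    Function.Bijective fun i ↦ (cosetRep p m i :
      Matrix.SpecialLinearGroup (Fin 2) ℤ_[p] ⧸ padicCongruenceSubgroup p (m + 1)) := by
  have hp0 : (p : ℤ_[p]) ≠ 0 := PadicInt.prime_p.ne_zero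
  constructor
  · rintro (x | x) (y | y) h <;>
      simp only [padicCongruenceSubgroup_coset_eq_iff, cosetRep_inl_zero, cosetRep_inl_one,
        cosetRep_inr_zero, cosetRep_inr_one, one_mul, mul_one] at h
    · exact congrArg _ (eq_of_pow_dvd_natCast_sub _ _ h).symm
    · refine absurd ?_ (not_pow_succ_dvd_one_sub m (((x : ℕ) : ℤ_[p]) * ((y : ℕ) : ℤ_[p])))
      convert h using 1
      ring
    · refine absurd ?_ (not_pow_succ_dvd_one_sub m (((x : ℕ) : ℤ_[p]) * ((y : ℕ) : ℤ_[p])))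
      rw [← dvd_neg]
      convert h using 1
      ring
    · rw [← mul_sub, pow_succ', mul_dvd_mul_iff_left hp0] at h
      exact congrArg _ (eq_of_pow_dvd_natCast_sub _ _ h)
  · intro q
    induction q using QuotientGroup.induction_on with | H g => ?_
    have hdet : g 0 0 * g 1 1 - g 0 1 * g 1 0 = 1 := by
      rw [← Matrix.det_fin_two]; exact g.det_coe
    by_cases ha : IsUnit (g 0 0)
    · obtain ⟨b, hb⟩ := ha.exists_right_inv
      -- `x` is the residue of `c / a`, where `b = a⁻¹`
      obtain ⟨x, hx⟩ := exists_fin_pow_dvd_sub (m + 1) (b * g 1 0)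
      refine ⟨.inl x, (padicCongruenceSubgroup_coset_eq_iff _ _).2 ?_⟩
      rw [cosetRep_inl_zero, cosetRep_inl_one]
      convert hx.mul_left (g 0 0) using 1
      linear_combination -(g 1 0) * hb
    · obtain ⟨t, ht⟩ := (PadicInt.not_isUnit_iff_p_dvd _).1 ha
      have hc : IsUnit (g 1 0) := by
        by_contra hc
        obtain ⟨s, hs⟩ := (PadicInt.not_isUnit_iff_p_dvd _).1 hc
        refine (PadicInt.not_isUnit_iff_p_dvd (1 : ℤ_[p])).2
          ⟨t * g 1 1 - g 0 1 * s, ?_⟩ isUnit_one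
        linear_combination -hdet + g 1 1 * ht - g 0 1 * hs
      obtain ⟨b, hb⟩ := hc.exists_right_inv
      -- `a = p t`, so `y` is the residue of `a / (p c) = b t`, where `b = c⁻¹`
      obtain ⟨y, hy⟩ := exists_fin_pow_dvd_sub m (b * t)
      refine ⟨.inr y, (padicCongruenceSubgroup_coset_eq_iff _ _).2 ?_⟩
      rw [cosetRep_inr_zero, cosetRep_inr_one]
      rw [pow_succ']
      convert (mul_dvd_mul_left (p : ℤ_[p]) hy).mul_left (-(g 1 0)) using 1
      rw [ht]
      linear_combination (p : ℤ_[p]) * t * hb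

/-- For a prime `p` and `n ≥ 1`, the subgroup
`{g ∈ SL₂(ℤ_p) : g 1 0 ∈ pⁿℤ_p}` of `SL₂(ℤ_p)` has index `p^(n−1)(p+1)`. -/
theorem padicCongruenceSubgroup_index (p : ℕ) [Fact p.Prime] (n : ℕ) (hn : 1 ≤ n) :
    (padicCongruenceSubgroup p n).index = p ^ (n - 1) * (p + 1) := by
  obtain ⟨m, rfl⟩ : ∃ m, n = m + 1 := ⟨n - 1, by omega⟩
  rw [Subgroup.index_eq_card, ← Nat.card_eq_of_bijective _ (cosetRep_bijective p m)]
  simp only [Nat.card_sum, Nat.card_fin, Nat.add_sub_cancel]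
  ring
end
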